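/- arXiv:math-ph/0506064 — 6 statements merged into one kernel-verified Lean document; each statement's English description precedes it below -/
import Mathlib

section
/- Let f : ℝ^N → ℝ^N be a smooth vector field that is divergence-free and admits a smooth conserved quantity H : ℝ^N → ℝ (i.e. ⟨∇H(z), f(z)⟩ = 0 for all z ∈ ℝ^N) whose sublevel sets {z : H(z) ≤ K} are compact for every K > 0. Let E ⊆ ℝ^N be a linear subspace with basis e₁, …, e_n, and suppose the following Hörmander condition holds: defining on ℝ^{N+1} the extended vector fields f̃(z,t) = (f(z), 1) and ẽ_i(z,t) = (e_i, 0), the smallest family of smooth vector fields on ℝ^{N+1} containing {f̃, ẽ₁, …, ẽ_n} and closed under Lie brackets spans ℝ^{N+1} at every point. Then for every initial condition z₀ ∈ ℝ^N and every terminal condition z₁ ∈ ℝ^N there exist a time T > 0 and a smooth control u ∈ C^∞([0,T], E) such that the solution of the ODE ż(t) = f(z(t)) + u(t) with z(0) = z₀ satisfies z(T) = z₁. -/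
open scoped Topology

/-- The Lie bracket of two vector fields: `[X,Y](z) = DY(z) X(z) - DX(z) Y(z)`. -/
noncomputable def lieBracket {V : Type*} [NormedAddCommGroup V] [NormedSpace ℝ V]
    (X Y : V → V) : V → V :=
  fun z => fderiv ℝ Y z (X z) - fderiv ℝ X z (Y z)

/-- The smallest family of vector fields containing `S` and closed under Lie brackets. -/
inductive LieGen {V : Type*} [NormedAddCommGroup V] [NormedSpace ℝ V]
    (S : Set (V → V)) : (V → V) → Prop
  | base (X : V → V) (hX : X ∈ S) : LieGen S X
  | bracket (X Y : V → V) (hX : LieGen S X) (hY : LieGen S Y) : LieGen S (lieBracket X Y)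

/-!
Lie brackets generated by the extended fields are the drift itself or have no time component; those
of the second kind form the ideal generated by the control directions, so the Hörmander condition
says that this ideal spans the tangent space at every point. Pull the control directions back to
the starting point along a controlled trajectory whose pulled back span is as large as possible.
This span cannot grow when the trajectory is extended, hence it contains the pullback of the whole
ideal and is everything. So the endpoint map is a submersion at that trajectory, and the sets of
points reachable from (or leading to) a given point have nonempty interior.

Conservation brings recurrence: by Liouville's theorem the drift flow preserves the finite volume of
any open forward invariant set cut off by a sublevel set of `H`, so up to closure the drift can be
run backwards inside such a set. Fast large controls make the closure of the forward orbit of an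
open set invariant under translations by `E`, so this closure is also invariant under the
time-reversed control system. By accessibility it is then open, and hence everything. Consequently
the forward orbit of the interior of the set reachable from `z₀` meets the interior of the set
leading to `z₁`.
-/

open Set Filter Metric
open scoped NNReal ContDiff Topology

namespace ConservativeControl

/-! ### Ordinary differential equations with globally Lipschitz right-hand side -/

section ODE

variable {X : Type*} [NormedAddCommGroup X] [NormedSpace ℝ X]

theorem hasDerivAt_ite_le {v : ℝ → X → X} {a b c : ℝ} {z w : ℝ → X}
    (hz : ∀ t ∈ Icc a b, HasDerivAt z (v t (z t)) t)
    (hw : ∀ t ∈ Icc b c, HasDerivAt w (v t (w t)) t) (h : z b = w b) :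
    ∀ t ∈ Icc a c, HasDerivAt (fun t => if t ≤ b then z t else w t)
      (v t (if t ≤ b then z t else w t)) t := by
  intro t ht
  rcases lt_trichotomy t b with htb | rfl | htb
  · rw [if_pos htb.le]
    refine (hz t ⟨ht.1, htb.le⟩).congr_of_eventuallyEq ?_
    filter_upwards [Iio_mem_nhds htb] with s hs using if_pos hs.le
  · rw [if_pos le_rfl, ← hasDerivWithinAt_univ, ← Iic_union_Ici]
    refine .union ((hz t ⟨ht.1, le_rfl⟩).hasDerivWithinAt.congr_of_mem
      (fun s hs => if_pos hs) self_mem_Iic) ?_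
    rw [h]
    refine (hw t ⟨le_rfl, ht.2⟩).hasDerivWithinAt.congr_of_mem (fun s hs => ?_) self_mem_Ici
    rcases (mem_Ici.mp hs).eq_or_lt with rfl | hts
    · rw [if_pos le_rfl, h]
    · rw [if_neg hts.not_ge]
  · rw [if_neg htb.not_ge]
    refine (hw t ⟨htb.le, ht.2⟩).congr_of_eventuallyEq ?_
    filter_upwards [Ioi_mem_nhds htb] with s hs using if_neg (not_le.mpr hs)

theorem gronwallBound_le {δ K ε x : ℝ} (hK : 0 ≤ K) (hε : 0 ≤ ε) :
    gronwallBound δ K ε x ≤ (δ + ε * x) * Real.exp (K * x) := by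
  rcases hK.eq_or_lt with rfl | hK
  · simp [gronwallBound_K0]
  · have hexp : Real.exp (K * x) - 1 ≤ K * x * Real.exp (K * x) := by
      have := mul_le_mul_of_nonneg_right (Real.add_one_le_exp (-(K * x)))
        (Real.exp_pos (K * x)).le
      rw [← Real.exp_add, neg_add_cancel, Real.exp_zero] at this
      linarith
    calc gronwallBound δ K ε x
        = δ * Real.exp (K * x) + ε / K * (Real.exp (K * x) - 1) :=
          congrFun (gronwallBound_of_K_ne_0 hK.ne') x
      _ ≤ δ * Real.exp (K * x) + ε / K * (K * x * Real.exp (K * x)) := by gcongr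
      _ = (δ + ε * x) * Real.exp (K * x) := by field_simp

theorem norm_le_mul_exp_of_norm_deriv_le {ρ ρ' : ℝ → X} {K δ ε T : ℝ} (hK : 0 ≤ K) (hε : 0 ≤ ε)
    (hρ : ∀ t ∈ Icc 0 T, HasDerivAt ρ (ρ' t) t) (h0 : ‖ρ 0‖ ≤ δ)
    (hb : ∀ t ∈ Icc 0 T, ‖ρ' t‖ ≤ K * ‖ρ t‖ + ε) :
    ∀ t ∈ Icc 0 T, ‖ρ t‖ ≤ (δ + ε * T) * Real.exp (K * T) := by
  intro t ht
  calc ‖ρ t‖ ≤ gronwallBound δ K ε (t - 0) :=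
        norm_le_gronwallBound_of_norm_deriv_right_le
          (fun t ht => (hρ t ht).continuousAt.continuousWithinAt)
          (fun t ht => (hρ t (Ico_subset_Icc_self ht)).hasDerivWithinAt) h0
          (fun t ht => hb t (Ico_subset_Icc_self ht)) t ht
    _ ≤ gronwallBound δ K ε T :=
        gronwallBound_mono ((norm_nonneg _).trans h0) hε hK (by linarith [ht.2])
    _ ≤ (δ + ε * T) * Real.exp (K * T) := gronwallBound_le hK hε

variable [CompleteSpace X] {v : ℝ → X → X} {K : ℝ≥0}

theorem exists_hasDerivAt_of_lipschitz_local (hv : ∀ t, LipschitzWith K (v t))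
    (hc : ∀ x, Continuous fun t => v t x) (t₀ : ℝ) (x₀ : X) :
    ∃ α : ℝ → X, α t₀ = x₀ ∧ ∀ t ∈ Ioo (t₀ - 1 / (2 * (K + 1))) (t₀ + 1 / (2 * (K + 1))),
      HasDerivAt α (v t (α t)) t := by
  set τ : ℝ := 1 / (2 * (K + 1)) with hτ
  have hτ0 : 0 < τ := by positivity
  obtain ⟨B, hB⟩ := (isCompact_Icc (a := t₀ - τ) (b := t₀ + τ)).exists_bound_of_continuousOn
    (hc x₀).continuousOn
  lift B to ℝ≥0 using (norm_nonneg _).trans (hB t₀ ⟨by linarith, by linarith⟩)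
  -- On the ball of radius `B` the field is bounded by `(1 + K) B`, and `(1 + K) B τ ≤ B`.
  have hPL : IsPicardLindelof v (tmin := t₀ - τ) (tmax := t₀ + τ)
      ⟨t₀, by constructor <;> linarith⟩ x₀ B 0 (B + K * B) K := by
    refine ⟨fun t _ => (hv t).lipschitzOnWith, fun x _ => (hc x).continuousOn, ?_, ?_⟩
    · intro t ht x hx
      calc ‖v t x‖ ≤ ‖v t x₀‖ + ‖v t x - v t x₀‖ := norm_le_norm_add_norm_sub' _ _
        _ ≤ B + K * dist x x₀ := by
          gcongr
          exacts [hB t ht, dist_eq_norm (v t x) _ ▸ (hv t).dist_le_mul x x₀]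
        _ ≤ B + K * B := by gcongr; exact hx
    · simp only [add_sub_cancel_left, sub_sub_cancel, max_self, NNReal.coe_zero, sub_zero]
      push_cast
      calc (B + K * B : ℝ) * τ = B * (1 / 2) := by rw [hτ]; field_simp; ring
        _ ≤ B := by linarith [B.coe_nonneg]
  obtain ⟨α, h0, h⟩ := hPL.exists_eq_forall_mem_Icc_hasDerivWithinAt₀
  exact ⟨α, h0, fun t ht => (h t (Ioo_subset_Icc_self ht)).hasDerivAt (Icc_mem_nhds ht.1 ht.2)⟩

theorem exists_hasDerivAt_Icc_of_lipschitz (hv : ∀ t, LipschitzWith K (v t))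
    (hc : ∀ x, Continuous fun t => v t x) (x₀ : X) (b : ℝ) :
    ∃ z : ℝ → X, z 0 = x₀ ∧ ∀ t ∈ Icc (-b) b, HasDerivAt z (v t (z t)) t := by
  set σ : ℝ := 1 / (4 * (K + 1)) with hσ
  have hσ0 : 0 < σ := by positivity
  have hστ : σ < 1 / (2 * (K + 1)) := by rw [hσ]; gcongr; linarith
  suffices H : ∀ n : ℕ, ∃ z : ℝ → X, z 0 = x₀ ∧
      ∀ t ∈ Icc (-(n * σ)) (n * σ), HasDerivAt z (v t (z t)) t by
    obtain ⟨n, hn⟩ := exists_nat_ge (b / σ)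
    rw [div_le_iff₀ hσ0] at hn
    obtain ⟨z, h0, hz⟩ := H n
    exact ⟨z, h0, fun t ht => hz t ⟨by linarith [ht.1], by linarith [ht.2]⟩⟩
  intro n
  induction n with
  | zero =>
    obtain ⟨α, h0, hα⟩ := exists_hasDerivAt_of_lipschitz_local hv hc 0 x₀
    refine ⟨α, h0, fun t ht => hα t ?_⟩
    simp only [Nat.cast_zero, zero_mul, neg_zero] at ht
    constructor <;> linarith [ht.1, ht.2]
  | succ n ih =>
    obtain ⟨z, h0, hz⟩ := ih
    have hn : 0 ≤ n * σ := by positivity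
    obtain ⟨α, hα0, hα⟩ := exists_hasDerivAt_of_lipschitz_local hv hc (n * σ) (z (n * σ))
    obtain ⟨β, hβ0, hβ⟩ := exists_hasDerivAt_of_lipschitz_local hv hc (-(n * σ)) (z (-(n * σ)))
    have hright := hasDerivAt_ite_le (c := n * σ + σ) hz
      (fun t ht => hα t ⟨by linarith [ht.1], by linarith [ht.2]⟩) hα0.symm
    have hboth := hasDerivAt_ite_le (a := -(n * σ) - σ) (z := β)
      (fun t ht => hβ t ⟨by linarith [ht.1], by linarith [ht.2]⟩) hright
      (by rw [hβ0, if_pos (by linarith)])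
    refine ⟨_, ?_, fun t ht => hboth t ?_⟩
    · rcases hn.eq_or_lt with hn | hn
      · simp only [← hn, neg_zero, le_refl, if_true] at hβ0 ⊢
        rw [hβ0, h0]
      · rw [if_neg (by linarith), if_pos hn.le, h0]
    · push_cast at ht
      constructor <;> linarith [ht.1, ht.2]

theorem exists_hasDerivAt_of_lipschitz (hv : ∀ t, LipschitzWith K (v t))
    (hc : ∀ x, Continuous fun t => v t x) (x₀ : X) :
    ∃ z : ℝ → X, z 0 = x₀ ∧ ∀ t, HasDerivAt z (v t (z t)) t := by
  choose z hz0 hz using fun n : ℕ =>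
    exists_hasDerivAt_Icc_of_lipschitz hv hc x₀ (n + 1)
  have hzz : ∀ {n m : ℕ}, n ≤ m → ∀ t ∈ Ioo (-(n + 1 : ℝ)) (n + 1), z n t = z m t := by
    intro n m hnm t ht
    have hnm' : (n : ℝ) ≤ m := by exact_mod_cast hnm
    refine ODE_solution_unique_of_mem_Ioo (v := v) (s := fun _ => univ) (t₀ := 0)
      (fun t _ => (hv t).lipschitzOnWith) ⟨by linarith, by linarith⟩
      (fun s hs => ⟨hz n s (Ioo_subset_Icc_self hs), mem_univ _⟩)
      (fun s hs => ⟨hz m s ⟨by linarith [hs.1], by linarith [hs.2]⟩, mem_univ _⟩)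
      (by rw [hz0, hz0]) ht
  have hceil : ∀ t : ℝ, t ∈ Ioo (-(⌈|t|⌉₊ + 1 : ℝ)) (⌈|t|⌉₊ + 1) := fun t =>
    abs_lt.mp ((Nat.le_ceil |t|).trans_lt (lt_add_one _))
  refine ⟨fun t => z ⌈|t|⌉₊ t, hz0 _, fun t => ?_⟩
  refine (hz ⌈|t|⌉₊ t (Ioo_subset_Icc_self (hceil t))).congr_of_eventuallyEq ?_
  filter_upwards [isOpen_Ioo.mem_nhds (hceil t)] with s hs
  rcases le_total ⌈|s|⌉₊ ⌈|t|⌉₊ with h | h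
  · exact hzz h s (hceil s)
  · exact (hzz h s hs).symm

end ODE

/-! ### Tame vector fields -/

section Tame

variable {V : Type*} [NormedAddCommGroup V] [NormedSpace ℝ V]

/-- A smooth vector field that is globally Lipschitz with uniformly continuous derivative. Its
controlled trajectories are defined for all times and depend differentiably on parameters; cutting
off a smooth vector field outside a ball produces such a field. -/
structure IsTame (g : V → V) (K : ℝ≥0) : Prop where
  contDiff : ContDiff ℝ ∞ g
  lipschitzWith : LipschitzWith K g
  uniformContinuous_fderiv : UniformContinuous (fderiv ℝ g)

theorem exists_isTame_smul [FiniteDimensional ℝ V] {f : V → V} (hf : ContDiff ℝ ∞ f) (r : ℝ) :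
    ∃ (χ : V → ℝ) (K : ℝ≥0) (M : ℝ), IsTame (fun x => χ x • f x) K ∧ (∀ x, ‖χ x • f x‖ ≤ M) ∧
      (∀ x, 0 ≤ χ x) ∧ ∀ x ∈ closedBall 0 r, χ x = 1 := by
  have hr : r < |r| + 1 := (le_abs_self r).trans_lt (lt_add_one _)
  let χ : ContDiffBump (0 : V) := ⟨|r| + 1, |r| + 2, by positivity, by linarith⟩
  have hg : ContDiff ℝ ∞ fun x => χ x • f x := χ.contDiff.smul hf
  have hsupp : HasCompactSupport fun x => χ x • f x := χ.hasCompactSupport.smul_right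
  obtain ⟨K, hK⟩ := hg.lipschitzWith_of_hasCompactSupport hsupp (by simp)
  obtain ⟨M, hM⟩ := hg.continuous.bounded_above_of_compact_support hsupp
  refine ⟨χ, K, M, ⟨hg, hK, ?_⟩, hM, fun _ => χ.nonneg, fun x hx => ?_⟩
  · exact (hg.continuous_fderiv (by simp)).uniformContinuous_of_tendsto_cocompact
      (hsupp.fderiv ℝ).is_zero_at_infty
  · exact χ.one_of_mem_closedBall (closedBall_subset_closedBall hr.le hx)

namespace IsTame

variable {g : V → V} {K : ℝ≥0}

theorem differentiable (hg : IsTame g K) : Differentiable ℝ g :=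
  hg.contDiff.differentiable (by simp)

theorem norm_fderiv_le (hg : IsTame g K) (x : V) : ‖fderiv ℝ g x‖ ≤ K :=
  norm_fderiv_le_of_lipschitz ℝ hg.lipschitzWith

theorem lipschitzWith_add_const (hg : IsTame g K) (c : V) : LipschitzWith K fun x => g x + c :=
  LipschitzWith.of_dist_le_mul fun a b => by simpa using hg.lipschitzWith.dist_le_mul a b

theorem norm_sub_le (hg : IsTame g K) (x y : V) : ‖g x - g y‖ ≤ K * ‖x - y‖ := by
  simpa only [dist_eq_norm] using hg.lipschitzWith.dist_le_mul x y

theorem exists_norm_sub_sub_fderiv_le (hg : IsTame g K) {ε : ℝ} (hε : 0 < ε) :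
    ∃ η > 0, ∀ c, ∀ a ∈ ball c η, ∀ b ∈ ball c η,
      ‖g a - g b - fderiv ℝ g c (a - b)‖ ≤ ε * ‖a - b‖ := by
  obtain ⟨η, hη, h⟩ := Metric.uniformContinuous_iff.mp hg.uniformContinuous_fderiv ε hε
  refine ⟨η, hη, fun c a ha b hb => ?_⟩
  refine (convex_ball c η).norm_image_sub_le_of_norm_fderiv_le' (𝕜 := ℝ)
    (fun x _ => hg.differentiable x) (fun x hx => ?_) hb ha
  rw [← dist_eq_norm]
  exact (h hx).le

theorem eqOn_Icc (hg : IsTame g K) {u z w : ℝ → V} {T : ℝ}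
    (hz : ∀ t ∈ Icc 0 T, HasDerivAt z (g (z t) + u t) t)
    (hw : ∀ t ∈ Icc 0 T, HasDerivAt w (g (w t) + u t) t) (h0 : z 0 = w 0) :
    EqOn z w (Icc 0 T) :=
  ODE_solution_unique (v := fun t x => g x + u t) (fun t => hg.lipschitzWith_add_const (u t))
    (fun t ht => (hz t ht).continuousAt.continuousWithinAt)
    (fun t ht => (hz t (Ico_subset_Icc_self ht)).hasDerivWithinAt)
    (fun t ht => (hw t ht).continuousAt.continuousWithinAt)
    (fun t ht => (hw t (Ico_subset_Icc_self ht)).hasDerivWithinAt) h0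

theorem dist_le_mul_exp (hg : IsTame g K) {u z w : ℝ → V} {T : ℝ}
    (hz : ∀ t ∈ Icc 0 T, HasDerivAt z (g (z t) + u t) t)
    (hw : ∀ t ∈ Icc 0 T, HasDerivAt w (g (w t) + u t) t) :
    ∀ t ∈ Icc 0 T, dist (z t) (w t) ≤ dist (z 0) (w 0) * Real.exp (K * t) := by
  simpa only [sub_zero] using
    dist_le_of_trajectories_ODE (v := fun t x => g x + u t)
      (fun t => hg.lipschitzWith_add_const (u t))
      (fun t ht => (hz t ht).continuousAt.continuousWithinAt)
      (fun t ht => (hz t (Ico_subset_Icc_self ht)).hasDerivWithinAt)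
      (fun t ht => (hw t ht).continuousAt.continuousWithinAt)
      (fun t ht => (hw t (Ico_subset_Icc_self ht)).hasDerivWithinAt) le_rfl

theorem lipschitzWith_neg_comp_fderiv (hg : IsTame g K) (x : V) :
    LipschitzWith K fun Ψ : V →L[ℝ] V => -(Ψ ∘L fderiv ℝ g x) := by
  refine .of_dist_le_mul fun A B => ?_
  rw [dist_neg_neg, dist_eq_norm, dist_eq_norm, ← ContinuousLinearMap.sub_comp, mul_comm]
  refine (ContinuousLinearMap.opNorm_comp_le _ _).trans ?_
  gcongr
  exact hg.norm_fderiv_le _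

variable [CompleteSpace V]

theorem exists_trajectory (hg : IsTame g K) {u : ℝ → V} (hu : Continuous u) (x : V) :
    ∃ z : ℝ → V, z 0 = x ∧ ∀ t, HasDerivAt z (g (z t) + u t) t :=
  exists_hasDerivAt_of_lipschitz (v := fun t x => g x + u t)
    (fun t => hg.lipschitzWith_add_const (u t)) (fun _ => by fun_prop) x

theorem exists_pullback (hg : IsTame g K) {z : ℝ → V} (hz : Continuous z) :
    ∃ Ψ : ℝ → V →L[ℝ] V, Ψ 0 = .id ℝ V ∧ ∀ t, HasDerivAt Ψ (-(Ψ t ∘L fderiv ℝ g (z t))) t := by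
  have hc : Continuous fun t => fderiv ℝ g (z t) := hg.uniformContinuous_fderiv.continuous.comp hz
  exact exists_hasDerivAt_of_lipschitz (v := fun t Ψ => -(Ψ ∘L fderiv ℝ g (z t)))
    (fun t => hg.lipschitzWith_neg_comp_fderiv (z t))
    (fun x => (continuous_const.clm_comp hc).neg) _

variable {P : Type*} [NormedAddCommGroup P] [NormedSpace ℝ P]

theorem exists_variation (hg : IsTame g K) {z : ℝ → V} (hz : Continuous z) {Λ : ℝ → P →L[ℝ] V}
    (hΛ : Continuous Λ) (A : P →L[ℝ] V) :
    ∃ Ξ : ℝ → P →L[ℝ] V, Ξ 0 = A ∧ ∀ t, HasDerivAt Ξ (fderiv ℝ g (z t) ∘L Ξ t + Λ t) t := by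
  have hc : Continuous fun t => fderiv ℝ g (z t) := hg.uniformContinuous_fderiv.continuous.comp hz
  refine exists_hasDerivAt_of_lipschitz (v := fun t Ξ => fderiv ℝ g (z t) ∘L Ξ + Λ t) (K := K)
    (fun t => .of_dist_le_mul fun A B => ?_) (fun x => (hc.clm_comp continuous_const).add hΛ) _
  rw [dist_add_right, dist_eq_norm, dist_eq_norm, ← ContinuousLinearMap.comp_sub]
  refine (ContinuousLinearMap.opNorm_comp_le _ _).trans ?_
  gcongr
  exact hg.norm_fderiv_le _

end IsTame

/-! ### Dependence of trajectories on parameters -/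

namespace IsTame

variable {g : V → V} {K : ℝ≥0} {P : Type*} [NormedAddCommGroup P] [NormedSpace ℝ P]
  {T : ℝ} {u : ℝ → V} {Λ : ℝ → P →L[ℝ] V} {A : P →L[ℝ] V} {x : V} {z : P → ℝ → V}

theorem exists_norm_sub_le_of_param (hg : IsTame g K) (hΛ : Continuous Λ)
    (hz0 : ∀ p, z p 0 = x + A p)
    (hz : ∀ p t, HasDerivAt (z p) (g (z p t) + (u t + Λ t p)) t) :
    ∃ C : ℝ, 0 ≤ C ∧ ∀ p q, ∀ t ∈ Icc 0 T, ‖z p t - z q t‖ ≤ C * ‖p - q‖ := by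
  obtain ⟨B, hB⟩ := (isCompact_Icc (a := 0) (b := T)).exists_bound_of_continuousOn hΛ.continuousOn
  refine ⟨(‖A‖ + |B| * |T|) * Real.exp (K * T), by positivity, fun p q t ht => ?_⟩
  have hgron := norm_le_mul_exp_of_norm_deriv_le (ρ := fun t => z p t - z q t) (K := K)
    (δ := ‖A‖ * ‖p - q‖) (ε := |B| * ‖p - q‖) K.coe_nonneg (by positivity)
    (fun t _ => (hz p t).sub (hz q t))
    (by rw [hz0, hz0, add_sub_add_left_eq_sub, ← map_sub]; exact A.le_opNorm _)
    (fun t ht => ?_) t ht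
  · rw [abs_of_nonneg (ht.1.trans ht.2)]
    exact hgron.trans_eq (by ring)
  · calc ‖g (z p t) + (u t + Λ t p) - (g (z q t) + (u t + Λ t q))‖
        = ‖g (z p t) - g (z q t) + Λ t (p - q)‖ := by rw [map_sub]; congr 1; abel
      _ ≤ ‖g (z p t) - g (z q t)‖ + ‖Λ t (p - q)‖ := norm_add_le _ _
      _ ≤ K * ‖z p t - z q t‖ + |B| * ‖p - q‖ := add_le_add (hg.norm_sub_le _ _)
          ((Λ t).le_of_opNorm_le ((hB t ht).trans (le_abs_self B)) _)

theorem norm_sub_sub_variation_le (hg : IsTame g K) (hT : 0 ≤ T) (hz0 : ∀ p, z p 0 = x + A p)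
    (hz : ∀ p t, HasDerivAt (z p) (g (z p t) + (u t + Λ t p)) t) {Ξ : ℝ → P →L[ℝ] V}
    (hΞ0 : Ξ 0 = A) (hΞ : ∀ t, HasDerivAt Ξ (fderiv ℝ g (z 0 t) ∘L Ξ t + Λ t) t) {p q : P} {ε : ℝ}
    (hlin : ∀ t ∈ Icc 0 T,
      ‖g (z p t) - g (z q t) - fderiv ℝ g (z 0 t) (z p t - z q t)‖ ≤ ε) :
    ‖z p T - z q T - Ξ T (p - q)‖ ≤ ε * T * Real.exp (K * T) := by
  have hε : 0 ≤ ε := (norm_nonneg _).trans (hlin 0 ⟨le_rfl, hT⟩)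
  rw [← zero_add (ε * T)]
  refine norm_le_mul_exp_of_norm_deriv_le (ρ := fun t => z p t - z q t - Ξ t (p - q))
    K.coe_nonneg hε
    (fun t _ => ((hz p t).sub (hz q t)).sub ((hΞ t).clm_apply (hasDerivAt_const t (p - q))))
    (by rw [hz0, hz0, hΞ0, map_sub]; simp) (fun t ht => ?_) T ⟨hT, le_rfl⟩
  calc _ = ‖fderiv ℝ g (z 0 t) (z p t - z q t - Ξ t (p - q)) +
        (g (z p t) - g (z q t) - fderiv ℝ g (z 0 t) (z p t - z q t))‖ := by
        simp only [add_apply, ContinuousLinearMap.comp_apply, map_sub, map_zero]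
        congr 1; abel
    _ ≤ _ := norm_add_le_of_le ((fderiv ℝ g (z 0 t)).le_of_opNorm_le (hg.norm_fderiv_le _) _)
        (hlin t ht)

theorem hasStrictFDerivAt_endpoint (hg : IsTame g K) (hT : 0 ≤ T) (hΛ : Continuous Λ)
    (hz0 : ∀ p, z p 0 = x + A p) (hz : ∀ p t, HasDerivAt (z p) (g (z p t) + (u t + Λ t p)) t)
    {Ξ : ℝ → P →L[ℝ] V} (hΞ0 : Ξ 0 = A)
    (hΞ : ∀ t, HasDerivAt Ξ (fderiv ℝ g (z 0 t) ∘L Ξ t + Λ t) t) :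
    HasStrictFDerivAt (fun p => z p T) (Ξ T) 0 := by
  obtain ⟨C, hC0, hC⟩ := hg.exists_norm_sub_le_of_param (T := T) hΛ hz0 hz
  refine .of_isLittleO (Asymptotics.isLittleO_iff.mpr fun c hc => ?_)
  set D : ℝ := C * T * Real.exp (K * T) + 1
  have hD0 : 0 < D := by positivity
  obtain ⟨η, hη, hlin⟩ := hg.exists_norm_sub_sub_fderiv_le (ε := c / D) (by positivity)
  have hnear : ∀ p : P, ‖p‖ < η / (C + 1) → ∀ t ∈ Icc 0 T, z p t ∈ ball (z 0 t) η := by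
    intro p hp t ht
    rw [lt_div_iff₀ (by positivity)] at hp
    have := hC p 0 t ht
    rw [sub_zero] at this
    rw [mem_ball, dist_eq_norm]
    nlinarith [norm_nonneg p]
  filter_upwards [ball_mem_nhds (0 : P × P) (show 0 < η / (C + 1) by positivity)] with ⟨p, q⟩ hpq
  obtain ⟨hp, hq⟩ : ‖p‖ < η / (C + 1) ∧ ‖q‖ < η / (C + 1) := by
    rwa [mem_ball_zero_iff, Prod.norm_mk, max_lt_iff] at hpq
  calc ‖z p T - z q T - Ξ T (p - q)‖
      ≤ c / D * (C * ‖p - q‖) * T * Real.exp (K * T) :=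
        hg.norm_sub_sub_variation_le hT hz0 hz hΞ0 hΞ fun t ht =>
          (hlin _ _ (hnear p hp t ht) _ (hnear q hq t ht)).trans (by gcongr; exact hC p q t ht)
    _ = C * T * Real.exp (K * T) / D * (c * ‖p - q‖) := by field_simp
    _ ≤ 1 * (c * ‖p - q‖) := by
        gcongr
        exact (div_le_one hD0).mpr (by simp [D])
    _ = c * ‖p - q‖ := one_mul _

end IsTame

end Tame

/-! ### Reachability -/

section Reach

variable {V : Type*} [NormedAddCommGroup V] [NormedSpace ℝ V]

/-- `Steers f u T x y`: the control `u` steers the system `z' = f z + u` from `x` to `y` in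
time `T`. -/
def Steers (f : V → V) (u : ℝ → V) (T : ℝ) (x y : V) : Prop :=
  ∃ z : ℝ → V, z 0 = x ∧ (∀ t ∈ Icc (0 : ℝ) T, HasDerivAt z (f (z t) + u t) t) ∧ z T = y

/-- Smooth `E`-valued controls acting only during `[0, T]`. They vanish to infinite order at both
ends of the interval, so that controls can be concatenated without losing smoothness. -/
structure AdmissibleControl (E : Submodule ℝ V) (T : ℝ) (u : ℝ → V) : Prop where
  contDiff : ContDiff ℝ ∞ u
  mem : ∀ t, u t ∈ E
  eq_zero_of_nonpos : ∀ t ≤ 0, u t = 0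
  eq_zero_of_ge : ∀ t, T ≤ t → u t = 0

/-- `y` can be reached from `x` in positive time by an admissible control. -/
def Reachable (f : V → V) (E : Submodule ℝ V) (x y : V) : Prop :=
  ∃ T > 0, ∃ u, AdmissibleControl E T u ∧ Steers f u T x y

variable {f : V → V} {E : Submodule ℝ V} {u : ℝ → V} {T : ℝ} {x y : V}

namespace AdmissibleControl

theorem zero (E : Submodule ℝ V) (T : ℝ) : AdmissibleControl E T fun _ => (0 : V) :=
  ⟨contDiff_const, fun _ => E.zero_mem, fun _ _ => rfl, fun _ _ => rfl⟩

theorem add {v : ℝ → V} (hu : AdmissibleControl E T u) (hv : AdmissibleControl E T v) :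
    AdmissibleControl E T fun t => u t + v t where
  contDiff := hu.contDiff.add hv.contDiff
  mem t := E.add_mem (hu.mem t) (hv.mem t)
  eq_zero_of_nonpos t ht := by rw [hu.eq_zero_of_nonpos t ht, hv.eq_zero_of_nonpos t ht, add_zero]
  eq_zero_of_ge t ht := by rw [hu.eq_zero_of_ge t ht, hv.eq_zero_of_ge t ht, add_zero]

theorem smul (hu : AdmissibleControl E T u) (c : ℝ) : AdmissibleControl E T fun t => c • u t where
  contDiff := contDiff_const.smul hu.contDiff
  mem t := E.smul_mem c (hu.mem t)
  eq_zero_of_nonpos t ht := by rw [hu.eq_zero_of_nonpos t ht, smul_zero]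
  eq_zero_of_ge t ht := by rw [hu.eq_zero_of_ge t ht, smul_zero]

theorem concat {T' : ℝ} {v : ℝ → V} (hT : 0 ≤ T) (hT' : 0 ≤ T') (hu : AdmissibleControl E T u)
    (hv : AdmissibleControl E T' v) :
    AdmissibleControl E (T + T') fun t => u t + v (t - T) where
  contDiff := hu.contDiff.add (hv.contDiff.comp (contDiff_id.sub contDiff_const))
  mem t := E.add_mem (hu.mem _) (hv.mem _)
  eq_zero_of_nonpos t ht := by
    rw [hu.eq_zero_of_nonpos t ht, hv.eq_zero_of_nonpos _ (by linarith), add_zero]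
  eq_zero_of_ge t ht := by
    rw [hu.eq_zero_of_ge t (by linarith), hv.eq_zero_of_ge _ (by linarith), add_zero]

theorem neg_comp_sub (hu : AdmissibleControl E T u) :
    AdmissibleControl E T fun t => -u (T - t) where
  contDiff := (hu.contDiff.comp (contDiff_const.sub contDiff_id)).neg
  mem t := E.neg_mem (hu.mem _)
  eq_zero_of_nonpos t ht := by rw [hu.eq_zero_of_ge _ (by linarith), neg_zero]
  eq_zero_of_ge t ht := by rw [hu.eq_zero_of_nonpos _ (by linarith), neg_zero]

end AdmissibleControl

theorem Reachable.trans {w : V} (hxy : Reachable f E x y) (hyw : Reachable f E y w) :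
    Reachable f E x w := by
  obtain ⟨T₁, hT₁, u₁, hu₁, z₁, hz₁0, hz₁, hz₁T⟩ := hxy
  obtain ⟨T₂, hT₂, u₂, hu₂, z₂, hz₂0, hz₂, hz₂T⟩ := hyw
  refine ⟨T₁ + T₂, by positivity, _, hu₁.concat hT₁.le hT₂.le hu₂, _, ?_,
    hasDerivAt_ite_le (v := fun t x => f x + (u₁ t + u₂ (t - T₁))) (b := T₁) (z := z₁)
      (w := fun t => z₂ (t - T₁)) (fun t ht => ?_) (fun t ht => ?_) ?_, ?_⟩
  · rw [if_pos hT₁.le, hz₁0]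
  · rw [hu₂.eq_zero_of_nonpos _ (by linarith [ht.2]), add_zero]
    exact hz₁ t ht
  · rw [hu₁.eq_zero_of_ge t ht.1, zero_add]
    exact (hz₂ (t - T₁) ⟨by linarith [ht.1], by linarith [ht.2]⟩).comp_sub_const t T₁
  · simp only [sub_self, hz₁T, hz₂0]
  · rw [if_neg (by linarith), add_sub_cancel_left, hz₂T]

theorem Steers.neg (h : Steers f u T x y) : Steers (-f) (fun t => -u (T - t)) T y x := by
  obtain ⟨z, hz0, hz, hzT⟩ := h
  refine ⟨fun t => z (T - t), by simpa only [sub_zero], fun t ht => ?_, by simpa only [sub_self]⟩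
  rw [Pi.neg_apply, ← neg_add]
  exact (hz (T - t) ⟨by linarith [ht.2], by linarith [ht.1]⟩).comp_const_sub T t

theorem Reachable.neg (h : Reachable f E x y) : Reachable (-f) E y x :=
  let ⟨T, hT, _, hu, h⟩ := h
  ⟨T, hT, _, hu.neg_comp_sub, h.neg⟩

theorem reachable_neg_iff : Reachable (-f) E y x ↔ Reachable f E x y :=
  ⟨fun h => neg_neg f ▸ h.neg, Reachable.neg⟩

variable [FiniteDimensional ℝ V]

theorem isOpen_setOf_exists_steers (hf : ContDiff ℝ ∞ f) (hu : Continuous u) (hT : 0 ≤ T)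
    {U : Set V} (hU : IsOpen U) : IsOpen {x | ∃ y ∈ U, Steers f u T x y} := by
  refine Metric.isOpen_iff.mpr ?_
  rintro x ⟨y, hyU, z, hz0, hz, hzT⟩
  obtain ⟨ε, hε, hεU⟩ := Metric.isOpen_iff.mp hU y hyU
  obtain ⟨r, hr⟩ := isCompact_Icc.exists_bound_of_continuousOn
    (fun t ht => (hz t ht).continuousAt.continuousWithinAt : ContinuousOn z (Icc 0 T))
  obtain ⟨χ, K, M, hg, -, -, hχ⟩ := exists_isTame_smul hf (r + 1)
  have hzg : ∀ t ∈ Icc 0 T, HasDerivAt z (χ (z t) • f (z t) + u t) t := fun t ht => by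
    rw [hχ (z t) (mem_closedBall_zero_iff.mpr (by linarith [hr t ht])), one_smul]
    exact hz t ht
  refine ⟨min ε 1 / Real.exp (K * T), by positivity, fun x' hx' => ?_⟩
  rw [mem_ball, lt_div_iff₀ (Real.exp_pos _)] at hx'
  obtain ⟨z', hz'0, hz'⟩ := hg.exists_trajectory hu x'
  have hclose : ∀ t ∈ Icc 0 T, dist (z' t) (z t) < min ε 1 := fun t ht =>
    calc dist (z' t) (z t) ≤ dist (z' 0) (z 0) * Real.exp (K * t) :=
          hg.dist_le_mul_exp (fun t _ => hz' t) hzg t ht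
      _ ≤ dist (z' 0) (z 0) * Real.exp (K * T) := by gcongr; exact ht.2
      _ < min ε 1 := by rwa [hz'0, hz0]
  refine ⟨z' T, hεU ?_, z', hz'0, fun t ht => ?_, rfl⟩
  · exact hzT ▸ (hclose T ⟨hT, le_rfl⟩).trans_le (min_le_left _ _)
  · have hmem : z' t ∈ closedBall 0 (r + 1) := by
      have h := (hclose t ht).trans_le (min_le_right _ _)
      rw [dist_eq_norm] at h
      rw [mem_closedBall_zero_iff]
      linarith [norm_le_norm_add_norm_sub' (z' t) (z t), hr t ht]
    simpa only [hχ _ hmem, one_smul] using hz' t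

theorem isOpen_setOf_exists_reachable (hf : ContDiff ℝ ∞ f) {U : Set V} (hU : IsOpen U) :
    IsOpen {x | ∃ y ∈ U, Reachable f E x y} := by
  have : {x | ∃ y ∈ U, Reachable f E x y} =
      ⋃ T > 0, ⋃ u, ⋃ (_ : AdmissibleControl E T u), {x | ∃ y ∈ U, Steers f u T x y} := by
    ext x
    simp only [Reachable, mem_ofPred_eq, mem_iUnion, exists_prop]
    grind
  rw [this]
  exact isOpen_iUnion fun T => isOpen_iUnion fun hT => isOpen_iUnion fun u =>
    isOpen_iUnion fun hu => isOpen_setOf_exists_steers hf hu.contDiff.continuous (le_of_lt hT) hU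

theorem isOpen_setOf_exists_reachable_from (hf : ContDiff ℝ ∞ f) {U : Set V} (hU : IsOpen U) :
    IsOpen {y | ∃ x ∈ U, Reachable f E x y} := by
  simpa only [reachable_neg_iff] using isOpen_setOf_exists_reachable (f := -f) (E := E) hf.neg hU

end Reach

/-! ### Jumps along control directions -/

section Jump

variable {V : Type*} [NormedAddCommGroup V] [NormedSpace ℝ V] {E : Submodule ℝ V}

/-- A smooth transition from `0` to `1` that is locally constant outside `[0, h]`. The control
`t ↦ deriv (jumpProfile h) t • c` moves the state by approximately `c` during the time `h`. -/
noncomputable def jumpProfile (h t : ℝ) : ℝ := Real.smoothTransition (3 * (t / h) - 1)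

theorem contDiff_jumpProfile (h : ℝ) : ContDiff ℝ ∞ (jumpProfile h) :=
  Real.smoothTransition.contDiff.comp (by fun_prop)

theorem jumpProfile_of_le {h t : ℝ} (hh : 0 < h) (ht : t ≤ h / 3) : jumpProfile h t = 0 := by
  have : t / h ≤ 1 / 3 := by rw [div_le_iff₀ hh]; linarith
  exact Real.smoothTransition.zero_of_nonpos (by linarith)

theorem jumpProfile_of_ge {h t : ℝ} (hh : 0 < h) (ht : 2 * h / 3 ≤ t) : jumpProfile h t = 1 := by
  have : 2 / 3 ≤ t / h := by rw [le_div_iff₀ hh]; linarith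
  exact Real.smoothTransition.one_of_one_le (by linarith)

theorem norm_jumpProfile_smul_le (h t : ℝ) (c : V) : ‖jumpProfile h t • c‖ ≤ ‖c‖ := by
  rw [norm_smul, jumpProfile, Real.norm_of_nonneg (Real.smoothTransition.nonneg _)]
  exact mul_le_of_le_one_left (norm_nonneg c) (Real.smoothTransition.le_one _)

theorem admissibleControl_deriv_jumpProfile_smul {h : ℝ} (hh : 0 < h) {c : V} (hc : c ∈ E) :
    AdmissibleControl E h fun t => deriv (jumpProfile h) t • c where
  contDiff := (contDiff_jumpProfile h).deriv'.smul contDiff_const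
  mem t := E.smul_mem _ hc
  eq_zero_of_nonpos t ht := by
    have : jumpProfile h =ᶠ[𝓝 t] fun _ => 0 := by
      filter_upwards [Iio_mem_nhds (show t < h / 3 by linarith)] with s hs
        using jumpProfile_of_le hh hs.le
    rw [this.deriv_eq, deriv_const, zero_smul]
  eq_zero_of_ge t ht := by
    have : jumpProfile h =ᶠ[𝓝 t] fun _ => 1 := by
      filter_upwards [Ioi_mem_nhds (show 2 * h / 3 < t by linarith)] with s hs
        using jumpProfile_of_ge hh hs.le
    rw [this.deriv_eq, deriv_const, zero_smul]

theorem norm_sub_sub_jumpProfile_smul_le {z w : ℝ → V} {S h M : ℝ} {c : V} (hh : 0 < h)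
    (hw : ∀ t, ‖w t‖ ≤ M)
    (hz : ∀ t ∈ Icc S (S + h), HasDerivAt z (w t + deriv (jumpProfile h) (t - S) • c) t) :
    ∀ t ∈ Icc S (S + h), ‖z t - z S - jumpProfile h (t - S) • c‖ ≤ M * h := by
  intro t ht
  have hder : ∀ s ∈ Icc S (S + h), HasDerivWithinAt (fun t => z t - jumpProfile h (t - S) • c)
      (w s) (Icc S (S + h)) s := by
    intro s hs
    have hprof : HasDerivAt (fun t => jumpProfile h (t - S)) (deriv (jumpProfile h) (s - S)) s :=
      (((contDiff_jumpProfile h).differentiable (by simp)) (s - S)).hasDerivAt.comp_sub_const s S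
    have := ((hz s hs).sub (hprof.smul_const c)).hasDerivWithinAt (s := Icc S (S + h))
    rwa [add_sub_cancel_right] at this
  have hbound := norm_image_sub_le_of_norm_deriv_le_segment' hder (fun s _ => hw s) t ht
  have hstart : jumpProfile h (S - S) = 0 := jumpProfile_of_le hh (by rw [sub_self]; positivity)
  simp only [hstart, zero_smul, sub_zero] at hbound
  have hM : 0 ≤ M := (norm_nonneg _).trans (hw 0)
  calc ‖z t - z S - jumpProfile h (t - S) • c‖ = ‖z t - jumpProfile h (t - S) • c - z S‖ := by
        rw [sub_right_comm]
    _ ≤ M * (t - S) := hbound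
    _ ≤ M * h := by gcongr; linarith [ht.2]

theorem add_mem_closure_setOf_reachable [FiniteDimensional ℝ V] {f : V → V} (hf : ContDiff ℝ ∞ f)
    (x : V) {c : V} (hc : c ∈ E) : x + c ∈ closure {y | Reachable f E x y} := by
  refine Metric.mem_closure_iff.mpr fun ε hε => ?_
  obtain ⟨χ, K, M, hg, hM, -, hχ⟩ := exists_isTame_smul hf (‖x‖ + ‖c‖ + 1)
  have hM0 : 0 ≤ M := (norm_nonneg _).trans (hM 0)
  set h : ℝ := min ε 1 / (M + 1) with hh
  have hh0 : 0 < h := by positivity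
  have hMh : M * h < min ε 1 := by
    rw [hh, mul_div_assoc', div_lt_iff₀ (by positivity)]
    nlinarith [lt_min hε one_pos]
  have hu := admissibleControl_deriv_jumpProfile_smul hh0 hc
  obtain ⟨z, hz0, hz⟩ := hg.exists_trajectory hu.contDiff.continuous x
  have hjump : ∀ t ∈ Icc 0 h, ‖z t - x - jumpProfile h t • c‖ < min ε 1 := by
    have := norm_sub_sub_jumpProfile_smul_le (S := 0) hh0 (fun t => hM (z t))
      (fun t _ => by simpa only [sub_zero] using hz t)
    simp only [sub_zero, zero_add, hz0] at this
    exact fun t ht => (this t ht).trans_lt hMh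
  refine ⟨z h, ⟨h, hh0, _, hu, z, hz0, fun t ht => ?_, rfl⟩, ?_⟩
  · have hmem : z t ∈ closedBall 0 (‖x‖ + ‖c‖ + 1) := by
      rw [mem_closedBall_zero_iff]
      have hdist := (hjump t ht).trans_le (min_le_right _ _)
      have hsum := norm_add₃_le (a := z t - x - jumpProfile h t • c) (b := x)
        (c := jumpProfile h t • c)
      rw [show z t - x - jumpProfile h t • c + x + jumpProfile h t • c = z t by abel] at hsum
      linarith [norm_jumpProfile_smul_le h t c]
    simpa only [hχ _ hmem, one_smul] using hz t
  · have hend := (hjump h ⟨hh0.le, le_rfl⟩).trans_le (min_le_left _ _)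
    rwa [jumpProfile_of_ge hh0 (by linarith), one_smul, sub_sub, ← dist_eq_norm, dist_comm] at hend

end Jump

/-! ### The Lie ideal generated by the control directions -/

section LieIdeal

variable {V : Type*} [NormedAddCommGroup V] [NormedSpace ℝ V] {ι : Type*}

/-- Membership in the smallest vector space of vector fields that contains the constant fields
`e i` and is stable under bracketing with the drift `f` and with the `e i`. By the Jacobi identity
it is the ideal generated by the `e i` in the Lie algebra generated by `f` and the `e i`. -/
inductive ControlIdeal (f : V → V) (e : ι → V) : (V → V) → Prop
  | zero : ControlIdeal f e 0
  | const (i : ι) : ControlIdeal f e fun _ => e i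
  | add {Y Z : V → V} (hY : ControlIdeal f e Y) (hZ : ControlIdeal f e Z) : ControlIdeal f e (Y + Z)
  | smul (c : ℝ) {Y : V → V} (hY : ControlIdeal f e Y) : ControlIdeal f e (c • Y)
  | drift_bracket {Y : V → V} (hY : ControlIdeal f e Y) : ControlIdeal f e (lieBracket f Y)
  | const_bracket (j : ι) {Y : V → V} (hY : ControlIdeal f e Y) :
    ControlIdeal f e (lieBracket (fun _ => e j) Y)

theorem lieBracket_eq_vectorField_lieBracket (X Y : V → V) :
    lieBracket X Y = VectorField.lieBracket ℝ X Y := rfl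

theorem contDiff_lieBracket {X Y : V → V} (hX : ContDiff ℝ ∞ X) (hY : ContDiff ℝ ∞ Y) :
    ContDiff ℝ ∞ (lieBracket X Y) :=
  hX.lieBracket_vectorField hY (by simp)

theorem lieBracket_lieBracket {X Y Z : V → V} (hX : ContDiff ℝ ∞ X) (hY : ContDiff ℝ ∞ Y)
    (hZ : ContDiff ℝ ∞ Z) :
    lieBracket (lieBracket X Y) Z =
      lieBracket X (lieBracket Y Z) - lieBracket Y (lieBracket X Z) := by
  have h2 : minSmoothness ℝ 2 ≤ ∞ := by
    rw [minSmoothness_of_isRCLikeNormedField]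
    exact WithTop.coe_le_coe.mpr (le_top : (2 : ℕ∞) ≤ ⊤)
  funext x
  rw [Pi.sub_apply, eq_sub_iff_add_eq]
  exact (VectorField.leibniz_identity_lieBracket h2 hX.contDiffAt hY.contDiffAt
    hZ.contDiffAt).symm

theorem lieBracket_prodMk_const {A B : V → V} (hA : Differentiable ℝ A) (hB : Differentiable ℝ B)
    (a b : ℝ) :
    lieBracket (fun q : V × ℝ => (A q.1, a)) (fun q : V × ℝ => (B q.1, b)) =
      fun q => (lieBracket A B q.1, 0) := by
  have hfderiv : ∀ {C : V → V} (c : ℝ), Differentiable ℝ C → ∀ q w : V × ℝ,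
      fderiv ℝ (fun q : V × ℝ => (C q.1, c)) q w = (fderiv ℝ C q.1 w.1, 0) := by
    intro C c hC q w
    have : HasFDerivAt (fun q : V × ℝ => (C q.1, c)) ((fderiv ℝ C q.1 ∘L .fst ℝ V ℝ).prod 0) q :=
      ((hC q.1).hasFDerivAt.comp q hasFDerivAt_fst).prodMk (hasFDerivAt_const c q)
    rw [this.fderiv]
    rfl
  funext q
  simp only [lieBracket, hfderiv a hA, hfderiv b hB, Prod.mk_sub_mk, sub_self]

namespace ControlIdeal

variable {f : V → V} {e : ι → V} {Y Z : V → V}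

theorem contDiff (hf : ContDiff ℝ ∞ f) (hY : ControlIdeal f e Y) : ContDiff ℝ ∞ Y := by
  induction hY with
  | zero | const => exact contDiff_const
  | add _ _ hY hZ => exact hY.add hZ
  | smul c _ hY => exact hY.const_smul c
  | drift_bracket _ hY => exact contDiff_lieBracket hf hY
  | const_bracket j _ hY => exact contDiff_lieBracket contDiff_const hY

theorem differentiable (hf : ContDiff ℝ ∞ f) (hY : ControlIdeal f e Y) : Differentiable ℝ Y :=
  (hY.contDiff hf).differentiable (by simp)

theorem neg (hY : ControlIdeal f e Y) : ControlIdeal f e (-Y) := by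
  simpa only [neg_one_smul] using hY.smul (-1)

theorem sub (hY : ControlIdeal f e Y) (hZ : ControlIdeal f e Z) : ControlIdeal f e (Y - Z) := by
  simpa only [sub_eq_add_neg] using hY.add hZ.neg

theorem bracket (hf : ContDiff ℝ ∞ f) (hY : ControlIdeal f e Y) (hZ : ControlIdeal f e Z) :
    ControlIdeal f e (lieBracket Y Z) := by
  induction hY generalizing Z with
  | zero =>
    rw [lieBracket_eq_vectorField_lieBracket, VectorField.lieBracket_zero_left]
    exact .zero
  | const i => exact hZ.const_bracket i
  | @add Y Y' hY hY' ihY ihY' =>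
    have : lieBracket (Y + Y') Z = lieBracket Y Z + lieBracket Y' Z := funext fun x =>
      VectorField.lieBracket_add_left (hY.differentiable hf x) (hY'.differentiable hf x)
    exact this ▸ (ihY hZ).add (ihY' hZ)
  | @smul c Y hY ihY =>
    have : lieBracket (c • Y) Z = c • lieBracket Y Z := funext fun x =>
      VectorField.lieBracket_const_smul_left (hY.differentiable hf x)
    exact this ▸ (ihY hZ).smul c
  | drift_bracket hY ihY =>
    rw [lieBracket_lieBracket hf (hY.contDiff hf) (hZ.contDiff hf)]
    exact (ihY hZ).drift_bracket.sub (ihY hZ.drift_bracket)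
  | const_bracket j hY ihY =>
    rw [lieBracket_lieBracket contDiff_const (hY.contDiff hf) (hZ.contDiff hf)]
    exact ((ihY hZ).const_bracket j).sub (ihY (hZ.const_bracket j))

theorem neg_drift (hY : ControlIdeal f e Y) : ControlIdeal (-f) e Y := by
  induction hY with
  | zero => exact .zero
  | const i => exact .const i
  | add _ _ hY hZ => exact hY.add hZ
  | smul c _ hY => exact hY.smul c
  | @drift_bracket Y _ hY =>
    have : lieBracket f Y = -lieBracket (-f) Y := by
      funext x
      simp only [lieBracket, fderiv_neg, Pi.neg_apply, map_neg, neg_apply]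
      abel
    exact this ▸ hY.drift_bracket.neg
  | const_bracket j _ hY => exact hY.const_bracket j

theorem eq_or_exists_of_lieGen (hf : ContDiff ℝ ∞ f) {X : V × ℝ → V × ℝ}
    (hX : LieGen ({fun q : V × ℝ => (f q.1, (1 : ℝ))} ∪
      range (fun i : ι => fun _ : V × ℝ => (e i, (0 : ℝ)))) X) :
    X = (fun q => (f q.1, 1)) ∨ ∃ Y, ControlIdeal f e Y ∧ X = fun q => (Y q.1, 0) := by
  have hfd : Differentiable ℝ f := hf.differentiable (by simp)
  induction hX with
  | base X hX =>
    rcases hX with hX | ⟨i, rfl⟩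
    exacts [.inl hX, .inr ⟨_, .const i, rfl⟩]
  | bracket X X' _ _ ihX ihX' =>
    right
    rcases ihX with rfl | ⟨Y, hY, rfl⟩ <;> rcases ihX' with rfl | ⟨Z, hZ, rfl⟩
    · refine ⟨_, .zero, ?_⟩
      rw [lieBracket_eq_vectorField_lieBracket, VectorField.lieBracket_self]
      rfl
    · exact ⟨_, hZ.drift_bracket, lieBracket_prodMk_const hfd (hZ.differentiable hf) 1 0⟩
    · refine ⟨_, hY.drift_bracket.neg, ?_⟩
      rw [lieBracket_prodMk_const (hY.differentiable hf) hfd]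
      funext q
      exact congrArg (·, (0 : ℝ)) VectorField.lieBracket_swap
    · exact ⟨_, hY.bracket hf hZ,
        lieBracket_prodMk_const (hY.differentiable hf) (hZ.differentiable hf) 0 0⟩

theorem exists_apply_eq_of_span_lieGen_eq_top (hf : ContDiff ℝ ∞ f) {p : V} {t : ℝ}
    (hHorm : Submodule.span ℝ {v : V × ℝ | ∃ X : V × ℝ → V × ℝ,
      LieGen ({fun q : V × ℝ => (f q.1, (1 : ℝ))} ∪
        range (fun i : ι => fun _ : V × ℝ => (e i, (0 : ℝ)))) X ∧ X (p, t) = v} = ⊤) (v : V) :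
    ∃ Y, ControlIdeal f e Y ∧ Y p = v := by
  suffices H : ∀ w : V × ℝ, ∃ Y, ControlIdeal f e Y ∧ Y p = w.1 - w.2 • f p by
    simpa only [zero_smul, sub_zero] using H (v, 0)
  intro w
  have hw : w ∈ (⊤ : Submodule ℝ (V × ℝ)) := Submodule.mem_top
  rw [← hHorm] at hw
  induction hw using Submodule.span_induction with
  | mem w hw =>
    obtain ⟨X, hX, rfl⟩ := hw
    rcases eq_or_exists_of_lieGen hf hX with rfl | ⟨Y, hY, rfl⟩
    · exact ⟨_, .zero, by simp⟩
    · exact ⟨_, hY, by simp⟩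
  | zero => exact ⟨_, .zero, by simp⟩
  | add w w' _ _ ih ih' =>
    obtain ⟨⟨Y, hY, hYp⟩, ⟨Y', hY', hYp'⟩⟩ := ih, ih'
    refine ⟨_, hY.add hY', ?_⟩
    rw [Pi.add_apply, hYp, hYp', Prod.fst_add, Prod.snd_add, add_smul]
    abel
  | smul a w _ ih =>
    obtain ⟨Y, hY, hYp⟩ := ih
    refine ⟨_, hY.smul a, ?_⟩
    rw [Pi.smul_apply, hYp, Prod.smul_fst, Prod.smul_snd, smul_sub, smul_assoc]

end ControlIdeal

end LieIdeal

/-! ### Pulling the control directions back along a trajectory -/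

section Transport

variable {V : Type*} [NormedAddCommGroup V] [NormedSpace ℝ V] {ι : Type*}

/-- A trajectory `z` of `ż = g z + u` from `x` that stays in the ball of radius `r` during `[0, T]`,
together with the inverse `Ψ` of the derivative of its flow: `Ψ t` carries tangent vectors at `z t`
back to tangent vectors at `x`. -/
structure IsTransportedTrajectory (g : V → V) (E : Submodule ℝ V) (x : V) (r T : ℝ) (u z : ℝ → V)
    (Ψ : ℝ → V →L[ℝ] V) : Prop where
  nonneg : 0 ≤ T
  admissible : AdmissibleControl E T u
  start : z 0 = x
  hasDerivAt : ∀ t, HasDerivAt z (g (z t) + u t) t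
  pullback_zero : Ψ 0 = .id ℝ V
  hasDerivAt_pullback : ∀ t, HasDerivAt Ψ (-(Ψ t ∘L fderiv ℝ g (z t))) t
  norm_lt : ∀ t ∈ Icc 0 T, ‖z t‖ < r

/-- The span of the control directions `e i` pulled back by `Ψ t`, for `t ∈ [0, T]`. When `Ψ` comes
from a transported trajectory, this is the space of first-order endpoint variations, seen at the
starting point. -/
def pullbackSpan (e : ι → V) (T : ℝ) (Ψ : ℝ → V →L[ℝ] V) : Submodule ℝ V :=
  Submodule.span ℝ {w | ∃ t ∈ Icc 0 T, ∃ i, w = Ψ t (e i)}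

variable {f g : V → V} {K : ℝ≥0} {M r T T' : ℝ} {E : Submodule ℝ V} {x : V} {e : ι → V}
  {u z z' : ℝ → V} {Ψ Ψ' : ℝ → V →L[ℝ] V}

theorem pullbackSpan_mono (hT : T ≤ T') (h : EqOn Ψ' Ψ (Icc 0 T)) :
    pullbackSpan e T Ψ ≤ pullbackSpan e T' Ψ' := by
  refine Submodule.span_mono ?_
  rintro w ⟨t, ht, i, rfl⟩
  exact ⟨t, Icc_subset_Icc_right hT ht, i, by rw [h ht]⟩

theorem IsTame.eqOn_pullback (hg : IsTame g K) (hz : EqOn z z' (Icc 0 T)) (h0 : Ψ 0 = Ψ' 0)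
    (hΨ : ∀ t, HasDerivAt Ψ (-(Ψ t ∘L fderiv ℝ g (z t))) t)
    (hΨ' : ∀ t, HasDerivAt Ψ' (-(Ψ' t ∘L fderiv ℝ g (z' t))) t) : EqOn Ψ Ψ' (Icc 0 T) :=
  ODE_solution_unique (v := fun t Φ => -(Φ ∘L fderiv ℝ g (z t)))
    (fun t => hg.lipschitzWith_neg_comp_fderiv (z t))
    (fun t _ => (hΨ t).continuousAt.continuousWithinAt) (fun t _ => (hΨ t).hasDerivWithinAt)
    (fun t _ => (hΨ' t).continuousAt.continuousWithinAt)
    (fun t ht => hz (Ico_subset_Icc_self ht) ▸ (hΨ' t).hasDerivWithinAt) h0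

theorem IsTame.norm_pullback_le (hg : IsTame g K) (h0 : Ψ 0 = .id ℝ V)
    (hΨ : ∀ t, HasDerivAt Ψ (-(Ψ t ∘L fderiv ℝ g (z t))) t) :
    ∀ t ∈ Icc 0 T, ‖Ψ t‖ ≤ Real.exp (K * T) := by
  intro t ht
  have hgron := norm_le_mul_exp_of_norm_deriv_le (ρ := Ψ) (K := K) (δ := 1) (ε := 0)
    K.coe_nonneg le_rfl (fun t _ => hΨ t) (by rw [h0]; exact ContinuousLinearMap.norm_id_le)
    (fun t _ => ?_) t ht
  · simpa only [zero_mul, add_zero, one_mul] using hgron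
  · rw [add_zero, norm_neg, mul_comm]
    refine (ContinuousLinearMap.opNorm_comp_le _ _).trans ?_
    gcongr
    exact hg.norm_fderiv_le _

theorem IsTame.norm_pullback_sub_le (hg : IsTame g K) (h0 : Ψ 0 = .id ℝ V)
    (hΨ : ∀ t, HasDerivAt Ψ (-(Ψ t ∘L fderiv ℝ g (z t))) t) {a b : ℝ} (ha : 0 ≤ a) (hab : a ≤ b) :
    ‖Ψ b - Ψ a‖ ≤ Real.exp (K * b) * K * (b - a) := by
  refine norm_image_sub_le_of_norm_deriv_le_segment' (fun t _ => (hΨ t).hasDerivWithinAt)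
    (fun t ht => ?_) b ⟨hab, le_rfl⟩
  rw [norm_neg]
  refine (ContinuousLinearMap.opNorm_comp_le _ _).trans ?_
  gcongr
  exacts [hg.norm_pullback_le h0 hΨ t ⟨ha.trans ht.1, ht.2.le⟩, hg.norm_fderiv_le _]

theorem mem_of_hasDerivAt_of_forall_mem [FiniteDimensional ℝ V] {Q : Submodule ℝ V} {φ : ℝ → V}
    {v : V} {a b : ℝ} (hab : a < b) (hφ : HasDerivAt φ v a) (hm : ∀ t ∈ Icc a b, φ t ∈ Q) :
    v ∈ Q := by
  have hslope : Tendsto (slope φ a) (𝓝[>] a) (𝓝 v) :=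
    (hasDerivAt_iff_tendsto_slope.mp hφ).mono_left (nhdsWithin_mono a fun _ ht => ne_of_gt ht)
  refine Q.closed_of_finiteDimensional.mem_of_tendsto hslope ?_
  filter_upwards [Ioc_mem_nhdsGT hab] with t ht
  rw [slope_def_module]
  exact Q.smul_mem _ (Q.sub_mem (hm t ⟨ht.1.le, ht.2⟩) (hm a ⟨le_rfl, hab.le⟩))

namespace IsTransportedTrajectory

theorem norm_end_lt (h : IsTransportedTrajectory g E x r T u z Ψ) : ‖z T‖ < r :=
  h.norm_lt T ⟨h.nonneg, le_rfl⟩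

theorem exists_extend_time (h : IsTransportedTrajectory g E x r T u z Ψ) :
    ∃ T' > T, ∀ t ∈ Icc T T', IsTransportedTrajectory g E x r t u z Ψ := by
  have hnear : ∀ᶠ t in 𝓝 T, ‖z t‖ < r :=
    (h.hasDerivAt T).continuousAt.norm.eventually_lt_const h.norm_end_lt
  obtain ⟨T', hT', hsub⟩ := mem_nhdsGE_iff_exists_Icc_subset.mp (mem_nhdsWithin_of_mem_nhds hnear)
  refine ⟨T', hT', fun t ht => { h with
    nonneg := h.nonneg.trans ht.1
    admissible := { h.admissible with
      eq_zero_of_ge := fun s hs => h.admissible.eq_zero_of_ge s (ht.1.trans hs) }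
    norm_lt := fun s hs => ?_ }⟩
  rcases le_total s T with hsT | hsT
  exacts [h.norm_lt s ⟨hs.1, hsT⟩, hsub ⟨hsT, hs.2.trans ht.2⟩]

theorem hasDerivAt_pullback_comp (h : IsTransportedTrajectory g E x r T u z Ψ)
    (hgf : ∀ y ∈ closedBall (0 : V) r, g y = f y) {Y : V → V} (hY : Differentiable ℝ Y) :
    HasDerivAt (fun t => Ψ t (Y (z t))) (Ψ T (lieBracket f Y (z T))) T := by
  have hge : g =ᶠ[𝓝 (z T)] f := by
    filter_upwards [isOpen_ball.mem_nhds (mem_ball_zero_iff.mpr h.norm_end_lt)] with y hy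
      using hgf y (ball_subset_closedBall hy)
  have hYz := (hY (z T)).hasFDerivAt.comp_hasDerivAt T (h.hasDerivAt T)
  refine ((h.hasDerivAt_pullback T).clm_apply hYz).congr_deriv ?_
  rw [h.admissible.eq_zero_of_ge T le_rfl, add_zero, hge.fderiv_eq, hge.eq_of_nhds, lieBracket,
    map_sub, neg_apply, ContinuousLinearMap.comp_apply, Function.comp_apply]
  abel

theorem exists_extend_jump [CompleteSpace V] (hg : IsTame g K) (hM : ∀ y, ‖g y‖ ≤ M)
    (h : IsTransportedTrajectory g E x r T u z Ψ) {c : V} (hc : c ∈ E) {τ : ℝ} (hτ : 0 < τ)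
    (hr : ‖z T‖ + ‖c‖ + M * τ < r) :
    ∃ u' z' Ψ', IsTransportedTrajectory g E x r (T + τ) u' z' Ψ' ∧ EqOn Ψ' Ψ (Icc 0 T) ∧
      ‖z' (T + τ) - (z T + c)‖ ≤ M * τ ∧ ‖Ψ' (T + τ) - Ψ T‖ ≤ Real.exp (K * (T + τ)) * K * τ := by
  have hadm := admissibleControl_deriv_jumpProfile_smul hτ hc
  have hadm' := h.admissible.concat h.nonneg hτ.le hadm
  obtain ⟨z', hz'0, hz'⟩ := hg.exists_trajectory hadm'.contDiff.continuous x
  obtain ⟨Ψ', hΨ'0, hΨ'⟩ :=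
    hg.exists_pullback (continuous_iff_continuousAt.mpr fun t => (hz' t).continuousAt)
  have hzz : EqOn z' z (Icc 0 T) := by
    refine hg.eqOn_Icc (u := u) (fun t ht => (hz' t).congr_deriv ?_) (fun t _ => h.hasDerivAt t)
      (hz'0.trans h.start.symm)
    rw [hadm.eq_zero_of_nonpos _ (by linarith [ht.2]), add_zero]
  have hΨΨ : EqOn Ψ' Ψ (Icc 0 T) :=
    hg.eqOn_pullback hzz (hΨ'0.trans h.pullback_zero.symm) hΨ' h.hasDerivAt_pullback
  have hjump : ∀ t ∈ Icc T (T + τ), ‖z' t - z T - jumpProfile τ (t - T) • c‖ ≤ M * τ := by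
    rw [← hzz ⟨h.nonneg, le_rfl⟩]
    refine norm_sub_sub_jumpProfile_smul_le hτ (fun t => hM (z' t)) fun t ht => ?_
    simpa only [h.admissible.eq_zero_of_ge t ht.1, zero_add] using hz' t
  have hTτ : T + τ ∈ Icc T (T + τ) := ⟨by linarith, le_rfl⟩
  refine ⟨_, z', Ψ', ⟨by linarith [h.nonneg], hadm', hz'0, hz', hΨ'0, hΨ', fun t ht => ?_⟩, hΨΨ,
    ?_, ?_⟩
  · rcases le_total t T with htT | htT
    · exact hzz ⟨ht.1, htT⟩ ▸ h.norm_lt t ⟨ht.1, htT⟩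
    · calc ‖z' t‖ ≤ ‖z T‖ + ‖jumpProfile τ (t - T) • c‖ +
            ‖z' t - z T - jumpProfile τ (t - T) • c‖ := by
            refine le_of_eq_of_le (congrArg norm ?_) (norm_add₃_le ..)
            abel
        _ ≤ ‖z T‖ + ‖c‖ + M * τ := by
            gcongr
            exacts [norm_jumpProfile_smul_le _ _ _, hjump t ⟨htT, ht.2⟩]
        _ < r := hr
  · have := hjump _ hTτ
    rwa [jumpProfile_of_ge hτ (by linarith), one_smul, sub_sub] at this
  · rw [← hΨΨ ⟨h.nonneg, le_rfl⟩]
    simpa only [add_sub_cancel_left] using hg.norm_pullback_sub_le hΨ'0 hΨ' h.nonneg hTτ.1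

variable [FiniteDimensional ℝ V] {Q : Submodule ℝ V} {Y : V → V}

theorem apply_add_mem_of_forall_extension (hg : IsTame g K) (hM : ∀ y, ‖g y‖ ≤ M)
    (h : IsTransportedTrajectory g E x r T u z Ψ) {c : V} (hc : c ∈ E) (hr : ‖z T‖ + ‖c‖ < r)
    (hY : Continuous Y)
    (hext : ∀ T' u' z' Ψ', IsTransportedTrajectory g E x r T' u' z' Ψ' → T ≤ T' →
      EqOn Ψ' Ψ (Icc 0 T) → Ψ' T' (Y (z' T')) ∈ Q) :
    Ψ T (Y (z T + c)) ∈ Q := by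
  rw [← SetLike.mem_coe, ← Q.closed_of_finiteDimensional.closure_eq, Metric.mem_closure_iff]
  intro ε hε
  have hcont : Continuous fun p : (V →L[ℝ] V) × V => p.1 (Y p.2) :=
    continuous_fst.clm_apply (hY.comp continuous_snd)
  obtain ⟨δ, hδ, hclose⟩ := Metric.continuous_iff.mp hcont (Ψ T, z T + c) ε hε
  obtain ⟨τ, hτ, hτr, hτz, hτΨ⟩ : ∃ τ > 0, ‖z T‖ + ‖c‖ + M * τ < r ∧ M * τ < δ ∧
      Real.exp (K * (T + τ)) * K * τ < δ := by
    have hsmall {φ : ℝ → ℝ} {b : ℝ} (hφ : Continuous φ) (h0 : φ 0 < b) : ∀ᶠ τ in 𝓝[>] 0, φ τ < b :=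
      (hφ.continuousAt.eventually_lt_const h0).filter_mono nhdsWithin_le_nhds
    exact (eventually_mem_nhdsWithin.and <| (hsmall (by fun_prop) (by simpa)).and <|
      (hsmall (by fun_prop) (by simpa)).and (hsmall (by fun_prop) (by simpa))).exists
  obtain ⟨u', z', Ψ', h', hΨ, hz'c, hΨ'c⟩ := h.exists_extend_jump hg hM hc hτ hτr
  refine ⟨_, hext _ _ _ _ h' (by linarith) hΨ, ?_⟩
  rw [dist_comm]
  refine hclose (Ψ' (T + τ), z' (T + τ)) ?_
  rw [Prod.dist_eq, dist_eq_norm, dist_eq_norm]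
  exact max_lt (hΨ'c.trans_lt hτΨ) (hz'c.trans_lt hτz)

theorem apply_lieBracket_const_mem (hg : IsTame g K) (hM : ∀ y, ‖g y‖ ≤ M)
    (h : IsTransportedTrajectory g E x r T u z Ψ) {c : V} (hc : c ∈ E) (hY : Differentiable ℝ Y)
    (hext : ∀ T' u' z' Ψ', IsTransportedTrajectory g E x r T' u' z' Ψ' → T ≤ T' →
      EqOn Ψ' Ψ (Icc 0 T) → Ψ' T' (Y (z' T')) ∈ Q) :
    Ψ T (lieBracket (fun _ => c) Y (z T)) ∈ Q := by
  have hline : HasDerivAt (fun s : ℝ => Ψ T (Y (z T + s • c)))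
      (Ψ T (lieBracket (fun _ => c) Y (z T))) 0 := by
    have hd : HasDerivAt (fun s : ℝ => z T + s • c) c 0 := by
      simpa using ((hasDerivAt_id (0 : ℝ)).smul_const c).const_add (z T)
    have hYd := (hY (z T + (0 : ℝ) • c)).hasFDerivAt.comp_hasDerivAt (0 : ℝ) hd
    simpa [lieBracket, Function.comp_def] using (Ψ T).hasFDerivAt.comp_hasDerivAt (0 : ℝ) hYd
  have hnear : ∀ᶠ s : ℝ in 𝓝 0, ‖z T‖ + ‖s • c‖ < r :=
    Continuous.tendsto' (by fun_prop) _ _ rfl |>.eventually_lt_const (by simpa using h.norm_end_lt)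
  obtain ⟨s₀, hs₀, hsub⟩ := mem_nhdsGE_iff_exists_Icc_subset.mp (mem_nhdsWithin_of_mem_nhds hnear)
  exact mem_of_hasDerivAt_of_forall_mem hs₀ hline fun s hs =>
    h.apply_add_mem_of_forall_extension hg hM (E.smul_mem s hc) (hsub hs) hY.continuous hext

theorem pullbackSpan_eq_of_extension
    (hmax : ∀ T u z Ψ, IsTransportedTrajectory g E x r T u z Ψ →
      Module.finrank ℝ (pullbackSpan e T Ψ) ≤ Module.finrank ℝ Q)
    (hQ : pullbackSpan e T Ψ = Q) (h' : IsTransportedTrajectory g E x r T' u z' Ψ') (hT : T ≤ T')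
    (hΨ : EqOn Ψ' Ψ (Icc 0 T)) : pullbackSpan e T' Ψ' = Q := by
  subst hQ
  exact (Submodule.eq_of_le_of_finrank_le (pullbackSpan_mono hT hΨ) (hmax _ _ _ _ h')).symm

-- If extending a trajectory cannot enlarge its pullback span `Q`, then `Ψ (Y z) ∈ Q` persists along
-- all extensions, hence is inherited by `[f, Y]` (differentiate in time) and by `[e j, Y]`
-- (differentiate in the size of a jump along `e j`).
theorem apply_mem_of_controlIdeal (hg : IsTame g K) (hM : ∀ y, ‖g y‖ ≤ M) (hf : ContDiff ℝ ∞ f)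
    (hgf : ∀ y ∈ closedBall (0 : V) r, g y = f y) (he : ∀ i, e i ∈ E)
    (hmax : ∀ T u z Ψ, IsTransportedTrajectory g E x r T u z Ψ →
      Module.finrank ℝ (pullbackSpan e T Ψ) ≤ Module.finrank ℝ Q)
    (hY : ControlIdeal f e Y) (h : IsTransportedTrajectory g E x r T u z Ψ)
    (hQ : pullbackSpan e T Ψ = Q) : Ψ T (Y (z T)) ∈ Q := by
  induction hY generalizing T u z Ψ with
  | zero => simp
  | const i => exact hQ ▸ Submodule.subset_span ⟨T, ⟨h.nonneg, le_rfl⟩, i, rfl⟩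
  | add _ _ ihY ihZ => exact (map_add (Ψ T) _ _).symm ▸ Q.add_mem (ihY h hQ) (ihZ h hQ)
  | smul c _ ihY => exact (map_smul (Ψ T) c _).symm ▸ Q.smul_mem c (ihY h hQ)
  | drift_bracket hY ihY =>
    obtain ⟨T', hT', hext⟩ := h.exists_extend_time
    have hderiv := h.hasDerivAt_pullback_comp hgf (hY.differentiable hf)
    exact mem_of_hasDerivAt_of_forall_mem hT' hderiv fun t ht =>
      ihY (hext t ht) (pullbackSpan_eq_of_extension hmax hQ (hext t ht) ht.1 fun _ _ => rfl)
  | const_bracket j hY ihY =>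
    exact h.apply_lieBracket_const_mem hg hM (he j) (hY.differentiable hf)
      fun T' u' z' Ψ' h' hT' hΨ => ihY h' (pullbackSpan_eq_of_extension hmax hQ h' hT' hΨ)

end IsTransportedTrajectory

end Transport

/-! ### Accessibility -/

section Access

theorem eqOn_zero_of_integral_contDiff_mul_eq_zero {c : ℝ → ℝ} {a b : ℝ} (hab : a < b)
    (hc : Continuous c)
    (h : ∀ φ : ℝ → ℝ, ContDiff ℝ ∞ φ → (∀ t ∉ Ioo a b, φ t = 0) → ∫ t in a..b, φ t * c t = 0) :
    EqOn c 0 (Icc a b) := by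
  have hae : ∀ᵐ t, t ∈ Ioo a b → c t = 0 := by
    refine isOpen_Ioo.ae_eq_zero_of_integral_contDiff_smul_eq_zero
      (hc.locallyIntegrable.locallyIntegrableOn _) fun φ hφ _ hsupp => ?_
    have hφ0 : ∀ t ∉ Ioo a b, φ t = 0 := fun t ht =>
      image_eq_zero_of_notMem_tsupport fun hts => ht (hsupp hts)
    rw [← intervalIntegral.integral_eq_integral_of_support_subset (a := a) (b := b)]
    · exact h φ hφ hφ0
    · refine fun t ht => Ioo_subset_Ioc_self (not_imp_comm.mp (fun hn => ?_) ht)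
      simp only [hφ0 t hn, zero_smul]
  have hIoo : EqOn c 0 (Ioo a b) :=
    MeasureTheory.Measure.eqOn_open_of_ae_eq (μ := MeasureTheory.volume)
      ((MeasureTheory.ae_restrict_iff' measurableSet_Ioo).mpr hae) isOpen_Ioo
      hc.continuousOn continuousOn_const
  exact closure_Ioo hab.ne ▸ hIoo.closure hc continuous_const

variable {V : Type*} [NormedAddCommGroup V] [NormedSpace ℝ V] {ι : Type*}
  {f g : V → V} {K : ℝ≥0} {M r T : ℝ} {E : Submodule ℝ V} {x : V} {e : ι → V}
  {u z : ℝ → V} {Ψ : ℝ → V →L[ℝ] V}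

theorem AdmissibleControl.intervalIntegrable {v : ℝ → V} (hv : AdmissibleControl E T v)
    (hΨ : Continuous Ψ) :
    IntervalIntegrable (fun t => Ψ t (v t)) MeasureTheory.volume 0 T :=
  (hΨ.clm_apply hv.contDiff.continuous).intervalIntegrable _ _

namespace IsTransportedTrajectory

theorem continuous (h : IsTransportedTrajectory g E x r T u z Ψ) : Continuous z :=
  continuous_iff_continuousAt.mpr fun t => (h.hasDerivAt t).continuousAt

theorem continuous_pullback (h : IsTransportedTrajectory g E x r T u z Ψ) : Continuous Ψ :=
  continuous_iff_continuousAt.mpr fun t => (h.hasDerivAt_pullback t).continuousAt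

theorem hasDerivAt_pullback_variation (h : IsTransportedTrajectory g E x r T u z Ψ)
    {Ξ Λ : ℝ → V →L[ℝ] V} (hΞ : ∀ t, HasDerivAt Ξ (fderiv ℝ g (z t) ∘L Ξ t + Λ t) t) (p : V)
    (t : ℝ) : HasDerivAt (fun t => Ψ t (Ξ t p)) (Ψ t (Λ t p)) t :=
  ((h.hasDerivAt_pullback t).clm_apply ((hΞ t).clm_apply (hasDerivAt_const t p))).congr_deriv
    (by simp)

theorem eventually_norm_lt (hg : IsTame g K)
    (h : IsTransportedTrajectory g E x r T u z Ψ) {Λ : ℝ → V →L[ℝ] V} (hΛ : Continuous Λ)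
    {Z : V → ℝ → V} (hZ0 : ∀ p, Z p 0 = x)
    (hZ : ∀ p t, HasDerivAt (Z p) (g (Z p t) + (u t + Λ t p)) t) (hZz : Z 0 = z) :
    ∀ᶠ p in 𝓝 0, ∀ t ∈ Icc 0 T, ‖Z p t‖ < r := by
  obtain ⟨C, -, hC⟩ := hg.exists_norm_sub_le_of_param (A := 0) (T := T) hΛ
    (fun p => by simpa using hZ0 p) hZ
  obtain ⟨t₀, ht₀, hmax⟩ := isCompact_Icc.exists_isMaxOn (nonempty_Icc.mpr h.nonneg)
    h.continuous.norm.continuousOn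
  have hsmall : ∀ᶠ p : V in 𝓝 0, C * ‖p‖ < r - ‖z t₀‖ :=
    Continuous.tendsto' (by fun_prop) _ _ rfl |>.eventually_lt_const
      (by simpa using h.norm_lt t₀ ht₀)
  filter_upwards [hsmall] with p hp t ht
  have hpt := hC p 0 t ht
  rw [hZz, sub_zero] at hpt
  linarith [norm_le_norm_add_norm_sub' (Z p t) (z t), isMaxOn_iff.mp hmax t ht]

end IsTransportedTrajectory

/-- The vectors `∫ Ψ t (v t) dt` with `v` an admissible control. When `Ψ` comes from a transported
trajectory, these are the first-order variations of its endpoint, pulled back to its start. -/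
def variationSpace (E : Submodule ℝ V) (T : ℝ) (hΨ : Continuous Ψ) : Submodule ℝ V where
  carrier := {w | ∃ v, AdmissibleControl E T v ∧ ∫ t in 0..T, Ψ t (v t) = w}
  add_mem' := by
    rintro _ _ ⟨v, hv, rfl⟩ ⟨w, hw, rfl⟩
    refine ⟨_, hv.add hw, ?_⟩
    simp only [map_add]
    exact intervalIntegral.integral_add (hv.intervalIntegrable hΨ) (hw.intervalIntegrable hΨ)
  zero_mem' := ⟨_, .zero E T, by simp⟩
  smul_mem' := by
    rintro c _ ⟨v, hv, rfl⟩
    refine ⟨_, hv.smul c, ?_⟩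
    simp only [map_smul]
    exact intervalIntegral.integral_smul _ _

variable [FiniteDimensional ℝ V]

theorem pullbackSpan_le_variationSpace (hT : 0 < T) (hΨ : Continuous Ψ) (he : ∀ i, e i ∈ E) :
    pullbackSpan e T Ψ ≤ variationSpace E T hΨ := by
  refine Submodule.span_le.mpr ?_
  rintro _ ⟨t, ht, i, rfl⟩
  by_contra hnot
  obtain ⟨ℓ, hℓt, hℓ⟩ := Submodule.exists_le_ker_of_notMem hnot
  let ℓ' : V →L[ℝ] ℝ := LinearMap.toContinuousLinearMap ℓ
  refine hℓt (eqOn_zero_of_integral_contDiff_mul_eq_zero (c := fun t => ℓ' (Ψ t (e i))) hT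
    (by fun_prop) (fun φ hφ hφ0 => ?_) ht)
  have hadm : AdmissibleControl E T fun t => φ t • e i :=
    { contDiff := hφ.smul contDiff_const
      mem := fun t => E.smul_mem _ (he i)
      eq_zero_of_nonpos := fun t ht => by rw [hφ0 t fun h => ht.not_gt h.1, zero_smul]
      eq_zero_of_ge := fun t ht => by rw [hφ0 t fun h => ht.not_gt h.2, zero_smul] }
  have hker : ℓ' (∫ t in 0..T, Ψ t (φ t • e i)) = 0 := hℓ ⟨_, hadm, rfl⟩
  rw [← ℓ'.intervalIntegral_comp_comm (hadm.intervalIntegrable hΨ)] at hker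
  simpa only [map_smul, smul_eq_mul] using hker

theorem exists_forall_integral_apply_eq (hΨ : Continuous Ψ) (htop : variationSpace E T hΨ = ⊤) :
    ∃ Λ : ℝ → V →L[ℝ] V, Continuous Λ ∧ (∀ p, AdmissibleControl E T fun t => Λ t p) ∧
      ∀ p, ∫ t in 0..T, Ψ t (Λ t p) = p := by
  have hmem : ∀ w, w ∈ variationSpace E T hΨ := fun w => htop ▸ Submodule.mem_top
  let b := Module.finBasis ℝ V
  choose v hv hvb using fun j => hmem (b j)
  let Λ : ℝ → V →L[ℝ] V := fun t => ∑ j,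
    (LinearMap.toContinuousLinearMap (b.coord j)).smulRight (v j t)
  have hΛ : ∀ t p, Λ t p = ∑ j, b.repr p j • v j t := fun t p => by simp [Λ]
  refine ⟨Λ, ?_, fun p => ?_, fun p => ?_⟩
  · exact continuous_finsetSum _ fun j _ => (ContinuousLinearMap.smulRightL ℝ V V
      (LinearMap.toContinuousLinearMap (b.coord j))).continuous.comp (hv j).contDiff.continuous
  · simp only [hΛ]
    exact
      { contDiff := ContDiff.sum fun j _ => contDiff_const.smul (hv j).contDiff
        mem := fun t => E.sum_mem fun j _ => E.smul_mem _ ((hv j).mem t)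
        eq_zero_of_nonpos := fun t ht => Finset.sum_eq_zero fun j _ => by
          rw [(hv j).eq_zero_of_nonpos t ht, smul_zero]
        eq_zero_of_ge := fun t ht => Finset.sum_eq_zero fun j _ => by
          rw [(hv j).eq_zero_of_ge t ht, smul_zero] }
  · simp only [hΛ, map_sum, map_smul]
    rw [intervalIntegral.integral_finsetSum]
    · simp only [intervalIntegral.integral_smul, hvb, b.sum_repr]
    · exact fun j _ => ((hv j).intervalIntegrable hΨ).continuousOn_smul continuousOn_const

theorem IsTransportedTrajectory.surjective_pullback (hg : IsTame g K)
    (h : IsTransportedTrajectory g E x r T u z Ψ) (t : ℝ) : Function.Surjective (Ψ t) := by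
  intro v
  obtain ⟨Φ, hΦ0, hΦ⟩ := hg.exists_variation (Λ := fun _ => 0) h.continuous continuous_const
    (.id ℝ V)
  have hderiv := h.hasDerivAt_pullback_variation hΦ v
  have hconst := is_const_of_deriv_eq_zero (fun t => (hderiv t).differentiableAt)
    (fun t => (hderiv t).deriv.trans (map_zero _)) t 0
  exact ⟨Φ t v, by simpa [hΦ0, h.pullback_zero] using hconst⟩

theorem exists_isTransportedTrajectory_pullbackSpan_eq_top (hg : IsTame g K)
    (hM : ∀ y, ‖g y‖ ≤ M) (hf : ContDiff ℝ ∞ f) (hgf : ∀ y ∈ closedBall (0 : V) r, g y = f y)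
    (he : ∀ i, e i ∈ E) (hx : ‖x‖ < r) (hL : ∀ p v : V, ∃ Y, ControlIdeal f e Y ∧ Y p = v) :
    ∃ T u z Ψ, 0 < T ∧ IsTransportedTrajectory g E x r T u z Ψ ∧ pullbackSpan e T Ψ = ⊤ := by
  let S : Set ℕ := {n | ∃ T u z Ψ, IsTransportedTrajectory g E x r T u z Ψ ∧
    Module.finrank ℝ (pullbackSpan e T Ψ) = n}
  have hS : S.Nonempty := by
    obtain ⟨z, hz0, hz⟩ := hg.exists_trajectory (u := fun _ => (0 : V)) continuous_const x
    obtain ⟨Ψ, hΨ0, hΨ⟩ :=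
      hg.exists_pullback (continuous_iff_continuousAt.mpr fun t => (hz t).continuousAt)
    refine ⟨_, 0, _, z, Ψ, ⟨le_rfl, .zero E 0, hz0, hz, hΨ0, hΨ, fun t ht => ?_⟩, rfl⟩
    rwa [le_antisymm ht.2 ht.1, hz0]
  have hSbdd : BddAbove S := by
    refine ⟨Module.finrank ℝ V, ?_⟩
    rintro n ⟨T, u, z, Ψ, -, rfl⟩
    exact Submodule.finrank_le _
  obtain ⟨T, u, z, Ψ, h, hrank⟩ := Nat.sSup_mem hS hSbdd
  have htop : pullbackSpan e T Ψ = ⊤ := by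
    refine eq_top_iff.mpr fun v _ => ?_
    obtain ⟨w, rfl⟩ := h.surjective_pullback hg T v
    obtain ⟨Y, hY, rfl⟩ := hL (z T) w
    refine h.apply_mem_of_controlIdeal hg hM hf hgf he (fun T' u' z' Ψ' h' => ?_) hY rfl
    rw [hrank]
    exact le_csSup hSbdd ⟨T', u', z', Ψ', h', rfl⟩
  obtain ⟨T', hT', hext⟩ := h.exists_extend_time
  exact ⟨T', u, z, Ψ, h.nonneg.trans_lt hT', hext T' ⟨le_of_lt hT', le_rfl⟩,
    top_le_iff.mp (htop ▸ pullbackSpan_mono (le_of_lt hT') fun _ _ => rfl)⟩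

theorem IsTransportedTrajectory.map_endpoint_nhds_zero (hg : IsTame g K)
    (h : IsTransportedTrajectory g E x r T u z Ψ) {Λ : ℝ → V →L[ℝ] V} (hΛ : Continuous Λ)
    (hΛΨ : ∀ p, ∫ t in 0..T, Ψ t (Λ t p) = p) {Z : V → ℝ → V} (hZ0 : ∀ p, Z p 0 = x)
    (hZ : ∀ p t, HasDerivAt (Z p) (g (Z p t) + (u t + Λ t p)) t) (hZz : Z 0 = z) :
    map (fun p => Z p T) (𝓝 0) = 𝓝 (z T) := by
  obtain ⟨Ξ, hΞ0, hΞ⟩ := hg.exists_variation (P := V) h.continuous hΛ 0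
  have hΨΞ : Function.LeftInverse (Ψ T) (Ξ T) := fun p => by
    have hint := intervalIntegral.integral_eq_sub_of_hasDerivAt (a := 0) (b := T)
      (fun t _ => h.hasDerivAt_pullback_variation hΞ p t)
      ((h.continuous_pullback.clm_apply (hΛ.clm_apply continuous_const)).intervalIntegrable _ _)
    rw [hΛΨ, hΞ0, zero_apply, map_zero, sub_zero] at hint
    exact hint.symm
  have hsurj : (Ξ T).range = ⊤ :=
    LinearMap.range_eq_top.mpr (LinearMap.injective_iff_surjective.mp hΨΞ.injective)
  have hend := hg.hasStrictFDerivAt_endpoint (A := 0) h.nonneg hΛ (fun p => by simpa using hZ0 p)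
    hZ hΞ0 (hZz ▸ hΞ)
  exact hZz ▸ hend.map_nhds_eq_of_surj hsurj

theorem nonempty_interior_setOf_reachable (hf : ContDiff ℝ ∞ f) (he : ∀ i, e i ∈ E)
    (hL : ∀ p v : V, ∃ Y, ControlIdeal f e Y ∧ Y p = v) (x : V) :
    (interior {y | Reachable f E x y}).Nonempty := by
  obtain ⟨χ, K, M, hg, hM, -, hχ⟩ := exists_isTame_smul hf (‖x‖ + 1)
  have hgf : ∀ y ∈ closedBall (0 : V) (‖x‖ + 1), χ y • f y = f y := fun y hy => by
    rw [hχ y hy, one_smul]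
  obtain ⟨T, u, z, Ψ, hT, h, htop⟩ := exists_isTransportedTrajectory_pullbackSpan_eq_top
    hg hM hf hgf he (lt_add_one ‖x‖) hL
  obtain ⟨Λ, hΛ, hadm, hΛΨ⟩ := exists_forall_integral_apply_eq h.continuous_pullback
    (top_le_iff.mp (htop ▸ pullbackSpan_le_variationSpace hT h.continuous_pullback he))
  have hadm' : ∀ p, AdmissibleControl E T fun t => u t + Λ t p := fun p => h.admissible.add (hadm p)
  choose Z hZ0 hZ using fun p => hg.exists_trajectory (hadm' p).contDiff.continuous x
  have hZz : Z 0 = z := ODE_solution_unique_univ (t₀ := 0) (v := fun t y => χ y • f y + u t)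
    (s := fun _ => univ) (fun t => (hg.lipschitzWith_add_const (u t)).lipschitzOnWith)
    (fun t => ⟨by simpa using hZ 0 t, mem_univ _⟩) (fun t => ⟨h.hasDerivAt t, mem_univ _⟩)
    ((hZ0 0).trans h.start.symm)
  refine ⟨z T, mem_interior_iff_mem_nhds.mpr ?_⟩
  rw [← h.map_endpoint_nhds_zero hg hΛ hΛΨ hZ0 hZ hZz, mem_map]
  filter_upwards [h.eventually_norm_lt hg hΛ hZ0 hZ hZz] with p hp
  refine ⟨T, hT, _, hadm' p, Z p, hZ0 p, fun t ht => ?_, rfl⟩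
  rw [← hgf _ (mem_closedBall_zero_iff.mpr (hp t ht).le)]
  exact hZ p t

end Access

/-! ### Invariant closed sets -/

section Invariance

variable {V : Type*} [NormedAddCommGroup V] [NormedSpace ℝ V]

theorem frequently_slope_infDist_lt {C : Set V} {z γ : ℝ → V} {a z' γ' : V} {t q : ℝ}
    (hz : HasDerivAt z z' t) (hγ : HasDerivAt γ γ' t) (hγt : γ t = a)
    (hγC : ∀ᶠ s in 𝓝[>] t, γ s ∈ C) (ha : infDist (z t) C = dist (z t) a)
    (hq : ‖z' - γ'‖ < q) :
    ∃ᶠ s in 𝓝[>] t, (s - t)⁻¹ * (infDist (z s) C - infDist (z t) C) < q := by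
  have hslope : Tendsto (slope (fun s => z s - γ s) t) (𝓝[>] t) (𝓝 (z' - γ')) :=
    (hasDerivWithinAt_iff_tendsto_slope' self_notMem_Ioi).mp (hz.sub hγ).hasDerivWithinAt
  refine Eventually.frequently ?_
  filter_upwards [hslope.norm.eventually (gt_mem_nhds hq), hγC, self_mem_nhdsWithin]
    with s hs hsC hts
  refine lt_of_le_of_lt ?_ hs
  have hpos : 0 ≤ (s - t)⁻¹ := inv_nonneg.mpr (sub_nonneg.mpr (le_of_lt hts))
  rw [slope_def_module, norm_smul, Real.norm_of_nonneg hpos]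
  refine mul_le_mul_of_nonneg_left ?_ hpos
  calc infDist (z s) C - infDist (z t) C ≤ ‖z s - γ s‖ - ‖z t - γ t‖ := by
        rw [ha, hγt, ← dist_eq_norm, ← dist_eq_norm]
        exact sub_le_sub_right (infDist_le_dist_of_mem hsC) _
    _ ≤ ‖z s - γ s - (z t - γ t)‖ := norm_sub_norm_le _ _

variable [FiniteDimensional ℝ V]

theorem mem_of_hasDerivAt_of_tangent {v : ℝ → V → V} {K : ℝ≥0} (hv : ∀ t, LipschitzWith K (v t))
    {C : Set V} (hC : IsClosed C) {T : ℝ} (hT : 0 ≤ T)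
    (htan : ∀ a ∈ C, ∀ t ∈ Ico 0 T, ∃ γ : ℝ → V, γ t = a ∧ HasDerivAt γ (v t a) t ∧
      ∀ᶠ s in 𝓝[>] t, γ s ∈ C)
    {z : ℝ → V} (h0 : z 0 ∈ C) (hz : ∀ t ∈ Icc 0 T, HasDerivAt z (v t (z t)) t) : z T ∈ C := by
  have hzc : ContinuousOn z (Icc 0 T) := fun t ht => (hz t ht).continuousAt.continuousWithinAt
  have hbound : infDist (z T) C ≤ gronwallBound 0 K 0 (T - 0) := by
    refine le_gronwallBound_of_liminf_deriv_right_le (f := fun t => infDist (z t) C)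
      (f' := fun t => K * infDist (z t) C) ((continuous_infDist_pt C).comp_continuousOn hzc)
      (fun t ht q hq => ?_) (infDist_zero_of_mem h0).le (fun _ _ => (add_zero _).ge) T ⟨hT, le_rfl⟩
    obtain ⟨a, haC, ha⟩ := hC.exists_infDist_eq_dist ⟨_, h0⟩ (z t)
    obtain ⟨γ, hγt, hγ, hγC⟩ := htan a haC t ht
    refine frequently_slope_infDist_lt (hz t (Ico_subset_Icc_self ht)) hγ hγt hγC ha ?_
    refine lt_of_le_of_lt ?_ hq
    rw [ha, ← dist_eq_norm]
    exact (hv t).dist_le_mul _ _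
  rw [gronwallBound_ε0_δ0] at hbound
  exact (hC.mem_iff_infDist_zero ⟨_, h0⟩).mpr (le_antisymm hbound infDist_nonneg)

variable {f : V → V} {E : Submodule ℝ V}

theorem exists_hasDerivAt_eventually_mem (hf : ContDiff ℝ ∞ f) {C : Set V}
    (hCf : ∀ a ∈ C, ∀ h > 0, ∀ b, Steers f 0 h a b → b ∈ C) {a : V} (ha : a ∈ C) :
    ∃ ζ : ℝ → V, ζ 0 = a ∧ HasDerivAt ζ (f a) 0 ∧ ∀ᶠ s in 𝓝[≥] 0, ζ s ∈ C := by
  have hfa : ContDiffAt ℝ 1 f a := hf.contDiffAt.of_le (by simp)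
  obtain ⟨ζ, hζ0, ε, hε, hζ⟩ :=
    hfa.exists_forall_mem_closedBall_exists_eq_forall_mem_Ioo_hasDerivAt₀ 0
  refine ⟨ζ, hζ0, ?_, ?_⟩
  · simpa only [hζ0] using hζ 0 (by simpa using hε)
  · filter_upwards [Ico_mem_nhdsGE hε] with s hs
    rcases hs.1.eq_or_lt with rfl | hs0
    · rwa [hζ0]
    · refine hCf a ha s hs0 _ ⟨ζ, hζ0, fun t ht => ?_, rfl⟩
      simpa using hζ t ⟨by linarith [ht.1], by linarith [ht.2, hs.2]⟩

theorem Steers.mem_of_isClosed (hf : ContDiff ℝ ∞ f) {C : Set V} (hC : IsClosed C)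
    (hCE : ∀ a ∈ C, ∀ c ∈ E, a + c ∈ C)
    (hCf : ∀ a ∈ C, ∀ h > 0, ∀ b, Steers f 0 h a b → b ∈ C)
    {u : ℝ → V} (hu : ∀ t, u t ∈ E) {T : ℝ} (hT : 0 ≤ T) {x y : V} (hx : x ∈ C)
    (h : Steers f u T x y) : y ∈ C := by
  obtain ⟨z, rfl, hz, rfl⟩ := h
  obtain ⟨r, hr⟩ := (isCompact_Icc.image_of_continuousOn fun t ht =>
    (hz t ht).continuousAt.continuousWithinAt).isBounded.subset_closedBall (0 : V)
  obtain ⟨χ, K, -, hg, -, hχ0, hχ1⟩ := exists_isTame_smul hf r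
  refine mem_of_hasDerivAt_of_tangent (v := fun t x => χ x • f x + u t)
    (fun t => hg.lipschitzWith_add_const (u t)) hC hT (fun a ha t _ => ?_) hx fun t ht => ?_
  · obtain ⟨ζ, hζ0, hζ, hζC⟩ := exists_hasDerivAt_eventually_mem hf hCf ha
    have hτ : HasDerivAt (fun s => χ a * (s - t)) (χ a) t := by
      simpa using ((hasDerivAt_id t).sub_const t).const_mul (χ a)
    have hτt : χ a * (t - t) = 0 := by rw [sub_self, mul_zero]
    -- Following the drift for the time `χ a * (s - t)` and then translating by `(s - t) • u t`
    -- stays in `C` and starts with the velocity of the cut-off system.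
    refine ⟨fun s => ζ (χ a * (s - t)) + (s - t) • u t, by simp [hζ0], ?_, ?_⟩
    · refine (HasDerivAt.scomp t (hτt ▸ hζ) hτ).add ?_
      simpa using ((hasDerivAt_id t).sub_const t).smul_const (u t)
    · have hlim : Tendsto (fun s => χ a * (s - t)) (𝓝[>] t) (𝓝[≥] 0) := by
        refine tendsto_nhdsWithin_iff.mpr ⟨?_, ?_⟩
        · exact hτt ▸ hτ.continuousAt.tendsto.mono_left nhdsWithin_le_nhds
        · filter_upwards [self_mem_nhdsWithin] with s hs
          exact mul_nonneg (hχ0 a) (sub_nonneg.mpr (le_of_lt hs))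
      filter_upwards [hlim.eventually hζC] with s hs
      exact hCE _ hs _ (E.smul_mem _ (hu t))
  · simpa only [hχ1 _ (hr (mem_image_of_mem z ht)), one_smul] using hz t ht

end Invariance

/-! ### Volume preservation and recurrence -/

section Liouville

theorem trace_eq_sum_apply_single {n : Type*} [Fintype n] [DecidableEq n]
    (A : (n → ℝ) →L[ℝ] (n → ℝ)) : LinearMap.trace ℝ (n → ℝ) A = ∑ i, A (Pi.single i 1) i := by
  simp [LinearMap.trace_eq_matrix_trace ℝ (Pi.basisFun ℝ n), Matrix.trace]

theorem hasDerivAt_matrix_det {n : Type*} [Fintype n] [DecidableEq n] {M : ℝ → Matrix n n ℝ}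
    {M' : Matrix n n ℝ} {t : ℝ} (hM : ∀ i j, HasDerivAt (fun t => M t i j) (M' i j) t) :
    HasDerivAt (fun t => (M t).det) (M' * (M t).adjugate).trace t := by
  let D : ContinuousMultilinearMap ℝ (fun _ : n => n → ℝ) ℝ :=
    { toMultilinearMap := (Matrix.detRowAlternating (n := n) (R := ℝ)).toMultilinearMap
      cont := continuous_id.matrix_det (A := fun A : Matrix n n ℝ => A) }
  have hM' : HasDerivAt (fun t => (fun i => M t i : n → n → ℝ)) (fun i => M' i) t :=
    hasDerivAt_pi.mpr fun i => hasDerivAt_pi.mpr fun j => hM i j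
  refine ((D.hasFDerivAt fun i => M t i).comp_hasDerivAt t hM').congr_deriv ?_
  rw [ContinuousMultilinearMap.linearDeriv_apply]
  refine Finset.sum_congr rfl fun i _ => ?_
  change ((M t).updateRow i (M' i)).det = (M' * (M t).adjugate) i i
  rw [← Matrix.cramer_transpose_apply, Matrix.cramer_eq_adjugate_mulVec,
    ← Matrix.adjugate_transpose, Matrix.mulVec_transpose]
  rfl

variable {V : Type*} [NormedAddCommGroup V] [NormedSpace ℝ V] [FiniteDimensional ℝ V]

theorem hasDerivAt_det_of_hasDerivAt_comp {Ξ : ℝ → V →L[ℝ] V} {B : V →L[ℝ] V} {t : ℝ}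
    (hΞ : HasDerivAt Ξ (B ∘L Ξ t) t) :
    HasDerivAt (fun s => (Ξ s).det) ((Ξ t).det * LinearMap.trace ℝ V B) t := by
  let b := Module.finBasis ℝ V
  have hmat : ∀ i j, HasDerivAt (fun s => LinearMap.toMatrix b b (Ξ s) i j)
      ((LinearMap.toMatrix b b B * LinearMap.toMatrix b b (Ξ t)) i j) t := fun i j => by
    have hcol : HasDerivAt (fun s => Ξ s (b j)) ((B ∘L Ξ t) (b j)) t := by
      simpa using hΞ.clm_apply (hasDerivAt_const t (b j))
    rw [← LinearMap.toMatrix_comp]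
    simp only [LinearMap.toMatrix_apply]
    exact (LinearMap.toContinuousLinearMap (b.coord i)).hasFDerivAt.comp_hasDerivAt t hcol
  have hdet := hasDerivAt_matrix_det hmat
  rw [Matrix.mul_assoc, Matrix.mul_adjugate, Matrix.mul_smul, mul_one, Matrix.trace_smul,
    smul_eq_mul, ← LinearMap.trace_eq_matrix_trace] at hdet
  simpa only [LinearMap.det_toMatrix] using hdet

theorem det_eq_one_of_hasDerivAt_comp {Ξ B : ℝ → V →L[ℝ] V} (h0 : Ξ 0 = .id ℝ V)
    (hΞ : ∀ t, HasDerivAt Ξ (B t ∘L Ξ t) t) (hB : ∀ t, LinearMap.trace ℝ V (B t) = 0) (t : ℝ) :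
    (Ξ t).det = 1 := by
  have hderiv : ∀ t, HasDerivAt (fun t => (Ξ t).det) 0 t := fun t => by
    simpa only [hB, mul_zero] using hasDerivAt_det_of_hasDerivAt_comp (hΞ t)
  have hconst := is_const_of_deriv_eq_zero (fun t => (hderiv t).differentiableAt)
    (fun t => (hderiv t).deriv) t 0
  rw [hconst, h0]
  exact LinearMap.det_id

theorem IsTame.exists_hasFDerivAt_flow {g : V → V} {K : ℝ≥0} (hg : IsTame g K) {F : V → ℝ → V}
    (hF0 : ∀ q, F q 0 = q) (hF : ∀ q t, HasDerivAt (F q) (g (F q t)) t) {T : ℝ} (hT : 0 ≤ T) (q : V)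
    (htr : ∀ t, LinearMap.trace ℝ V (fderiv ℝ g (F q t)) = 0) :
    ∃ A : V →L[ℝ] V, HasFDerivAt (fun q => F q T) A q ∧ A.det = 1 := by
  have hc : Continuous (F q) := continuous_iff_continuousAt.mpr fun t => (hF q t).continuousAt
  obtain ⟨Ξ, hΞ0, hΞ⟩ := hg.exists_variation (Λ := 0) hc continuous_const (.id ℝ V)
  have hend : HasStrictFDerivAt (fun p => F (q + p) T) (Ξ T) 0 :=
    hg.hasStrictFDerivAt_endpoint (u := 0) (Λ := 0) (A := .id ℝ V) (x := q) hT continuous_const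
      (fun p => by simp [hF0]) (fun p t => by simpa using hF (q + p) t) hΞ0 (by simpa using hΞ)
  refine ⟨Ξ T, ?_, det_eq_one_of_hasDerivAt_comp hΞ0 (by simpa using hΞ) htr T⟩
  have hshift := (hasFDerivAt_comp_add_left (f := fun q => F q T) (x := 0) q).mp hend.hasFDerivAt
  rwa [add_zero] at hshift

end Liouville

section Recurrence

theorem subset_closure_image_of_measure_image_eq {X : Type*} [TopologicalSpace X]
    [MeasurableSpace X] [OpensMeasurableSpace X] {μ : MeasureTheory.Measure X}
    [μ.IsOpenPosMeasure] {F : X → X} {W : Set X} (hW : IsOpen W) (hF : MapsTo F W W)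
    (hμ : μ (F '' W) = μ W) (hfin : μ W ≠ ⊤) : W ⊆ closure (F '' W) := by
  intro y hy
  refine mem_closure_iff.mpr fun O hO hyO => ?_
  by_contra hempty
  rw [inter_comm, not_nonempty_iff_eq_empty, ← disjoint_iff_inter_eq_empty] at hempty
  have hOW : IsOpen (O ∩ W) := hO.inter hW
  have hle : μ (F '' W) + μ (O ∩ W) ≤ μ W := by
    rw [← MeasureTheory.measure_union (hempty.mono_right inter_subset_left) hOW.measurableSet]
    exact MeasureTheory.measure_mono (union_subset hF.image_subset inter_subset_right)
  rw [hμ] at hle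
  exact hle.not_gt (ENNReal.lt_add_right hfin (hOW.measure_pos μ ⟨y, hyO, hy⟩).ne')

variable {V : Type*} [NormedAddCommGroup V] [NormedSpace ℝ V] [FiniteDimensional ℝ V]
  {f : V → V} {u : ℝ → V} {T : ℝ} {x y y' : V}

theorem Steers.unique (hf : ContDiff ℝ ∞ f) (hT : 0 ≤ T) (h : Steers f u T x y)
    (h' : Steers f u T x y') : y = y' := by
  obtain ⟨z, hz0, hz, rfl⟩ := h
  obtain ⟨w, hw0, hw, rfl⟩ := h'
  have hzw : IsCompact (z '' Icc 0 T ∪ w '' Icc 0 T) :=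
    (isCompact_Icc.image_of_continuousOn fun t ht =>
      (hz t ht).continuousAt.continuousWithinAt).union
    (isCompact_Icc.image_of_continuousOn fun t ht => (hw t ht).continuousAt.continuousWithinAt)
  obtain ⟨r, hr⟩ := hzw.isBounded.subset_closedBall (0 : V)
  obtain ⟨χ, K, -, hg, -, -, hχ⟩ := exists_isTame_smul hf r
  refine hg.eqOn_Icc (u := u) (fun t ht => ?_) (fun t ht => ?_) (hz0.trans hw0.symm) ⟨hT, le_rfl⟩
  · simpa only [hχ _ (hr (.inl (mem_image_of_mem z ht))), one_smul] using hz t ht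
  · simpa only [hχ _ (hr (.inr (mem_image_of_mem w ht))), one_smul] using hw t ht

theorem exists_flowMap_of_conserved (hf : ContDiff ℝ ∞ f)
    (hdiv : ∀ z, LinearMap.trace ℝ V (fderiv ℝ f z) = 0) {H : V → ℝ} (hH : Differentiable ℝ H)
    (hcons : ∀ z, fderiv ℝ H z (f z) = 0) {k : ℝ} (hk : IsCompact {z | H z ≤ k}) (hT : 0 ≤ T) :
    ∃ F : V → V, ∀ q, H q < k → H (F q) = H q ∧ Steers f 0 T q (F q) ∧
      ∃ A : V →L[ℝ] V, HasFDerivAt F A q ∧ A.det = 1 := by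
  obtain ⟨r, hr⟩ := hk.isBounded.subset_closedBall 0
  obtain ⟨χ, K, -, hg, -, -, hχ⟩ := exists_isTame_smul hf r
  have hgf : ∀ z, H z < k → χ z • f z = f z := fun z hz => by
    rw [hχ z (hr (le_of_lt hz)), one_smul]
  choose F hF0 hF using fun q => hg.exists_trajectory (u := 0) continuous_const q
  simp only [Pi.zero_apply, add_zero] at hF
  have hHF : ∀ q t, H (F q t) = H q := fun q t => by
    have hderiv : ∀ t, HasDerivAt (fun t => H (F q t)) 0 t := fun t =>
      ((hH (F q t)).hasFDerivAt.comp_hasDerivAt t (hF q t)).congr_deriv (by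
        rw [map_smul, hcons, smul_zero])
    rw [is_const_of_deriv_eq_zero (fun t => (hderiv t).differentiableAt)
      (fun t => (hderiv t).deriv) t 0, hF0]
  have hlt : ∀ q, H q < k → ∀ t, H (F q t) < k := fun q hq t => (hHF q t).trans_lt hq
  refine ⟨fun q => F q T, fun q hq => ⟨hHF q T, ⟨F q, hF0 q, fun t _ => ?_, rfl⟩, ?_⟩⟩
  · simpa only [hgf _ (hlt q hq t), Pi.zero_apply, add_zero] using hF q t
  · refine hg.exists_hasFDerivAt_flow hF0 hF hT q fun t => ?_
    have hnhds : (fun z => χ z • f z) =ᶠ[𝓝 (F q t)] f := by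
      filter_upwards [hH.continuous.continuousAt.eventually_lt continuousAt_const (hlt q hq t)]
        with z hz using hgf z hz
    rw [hnhds.fderiv_eq, hdiv]

theorem addHaar_image_eq_of_det_fderiv_eq_one [MeasurableSpace V] [BorelSpace V]
    (μ : MeasureTheory.Measure V) [μ.IsAddHaarMeasure] {F : V → V} {W : Set V}
    (hW : MeasurableSet W) (hF : InjOn F W)
    (hdet : ∀ q ∈ W, ∃ A : V →L[ℝ] V, HasFDerivAt F A q ∧ A.det = 1) : μ (F '' W) = μ W := by
  choose! A hA hA1 using hdet
  rw [← MeasureTheory.lintegral_abs_det_fderiv_eq_addHaar_image μ hW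
    (fun q hq => (hA q hq).hasFDerivWithinAt) hF, ← MeasureTheory.setLIntegral_one]
  exact MeasureTheory.setLIntegral_congr_fun hW fun q hq => by simp [hA1 q hq]

theorem mem_closure_of_steers_neg (hf : ContDiff ℝ ∞ f)
    (hdiv : ∀ z, LinearMap.trace ℝ V (fderiv ℝ f z) = 0) {H : V → ℝ} (hH : Differentiable ℝ H)
    (hcons : ∀ z, fderiv ℝ H z (f z) = 0) (hproper : ∀ k, 0 < k → IsCompact {z | H z ≤ k})
    {W : Set V} (hW : IsOpen W) (hWf : ∀ q ∈ W, ∀ q', Steers f 0 T q q' → q' ∈ W) (hT : 0 ≤ T)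
    (hx : x ∈ W) (hxy : Steers (-f) 0 T x y) : y ∈ closure W := by
  have hk : 0 < max (H x) 0 + 1 := by positivity
  have hxk : H x < max (H x) 0 + 1 := (le_max_left _ _).trans_lt (lt_add_one _)
  set k := max (H x) 0 + 1
  obtain ⟨F, hF⟩ := exists_flowMap_of_conserved hf hdiv hH hcons (hproper k hk) hT
  have hback : ∀ q, H q < k → Steers (-f) 0 T (F q) q := fun q hq => by
    simpa [Pi.zero_def] using (hF q hq).2.1.neg
  have hWk : IsOpen (W ∩ {z | H z < k}) := hW.inter (isOpen_lt hH.continuous continuous_const)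
  have hmaps : MapsTo F (W ∩ {z | H z < k}) (W ∩ {z | H z < k}) := fun q ⟨hqW, hqk⟩ =>
    ⟨hWf q hqW _ (hF q hqk).2.1, (hF q hqk).1.trans_lt hqk⟩
  have hinj : InjOn F (W ∩ {z | H z < k}) := fun q hq q' hq' hqq' =>
    (hback q hq.2).unique hf.neg hT (hqq' ▸ hback q' hq'.2)
  let : MeasurableSpace V := borel V
  have : BorelSpace V := ⟨rfl⟩
  let μ : MeasureTheory.Measure V := .addHaar
  have hfin : μ (W ∩ {z | H z < k}) ≠ ⊤ :=
    MeasureTheory.measure_ne_top_of_subset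
      (inter_subset_right.trans (ofPred_subset_ofPred.mpr fun _ => le_of_lt))
      (hproper k hk).measure_ne_top
  have hrec : x ∈ closure (F '' (W ∩ {z | H z < k})) :=
    subset_closure_image_of_measure_image_eq hWk hmaps (addHaar_image_eq_of_det_fderiv_eq_one μ
      hWk.measurableSet hinj fun q hq => (hF q hq.2).2.2) hfin ⟨hx, hxk⟩
  -- Arbitrarily close to `x` there are points `F q` with `q ∈ W`, and going back from `F q` for the
  -- time `T` leads to `q`, which is then close to `y`.
  refine mem_closure_iff.mpr fun O hO hyO => ?_
  obtain ⟨_, ⟨b, hbO, hqb⟩, q, ⟨hqW, hqk⟩, rfl⟩ := mem_closure_iff.mp hrec _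
    (isOpen_setOf_exists_steers hf.neg continuous_const hT hO) ⟨y, hyO, hxy⟩
  exact ⟨q, hqb.unique hf.neg hT (hback q hqk) ▸ hbO, hqW⟩

end Recurrence

/-! ### Density of forward orbits -/

section Density

theorem mem_closure_of_rel {X : Type*} [TopologicalSpace X] {r : X → X → Prop} {W : Set X}
    (hr : ∀ U, IsOpen U → IsOpen {x | ∃ y ∈ U, r x y})
    (hW : ∀ x ∈ W, ∀ y, r x y → y ∈ closure W) {x y : X} (hx : x ∈ closure W) (hxy : r x y) :
    y ∈ closure W := by
  refine mem_closure_iff.mpr fun U hU hyU => ?_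
  obtain ⟨x', ⟨y', hy'U, hxy'⟩, hx'W⟩ := mem_closure_iff.mp hx _ (hr U hU) ⟨y, hyU, hxy⟩
  exact mem_closure_iff.mp (hW x' hx'W y' hxy') U hU hy'U

variable {V : Type*} [NormedAddCommGroup V] [NormedSpace ℝ V] [FiniteDimensional ℝ V] {ι : Type*}
  {f : V → V} {E : Submodule ℝ V} {e : ι → V}

theorem eq_univ_of_reachable_iff (hf : ContDiff ℝ ∞ f) (he : ∀ i, e i ∈ E)
    (hL : ∀ p v : V, ∃ Y, ControlIdeal f e Y ∧ Y p = v) {C : Set V} (hC : IsClosed C)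
    (hne : C.Nonempty) (hinv : ∀ x y, Reachable f E x y → (x ∈ C ↔ y ∈ C)) : C = univ := by
  refine IsClopen.eq_univ ⟨hC, isOpen_iff_mem_nhds.mpr fun x hx => ?_⟩ hne
  obtain ⟨y, hy⟩ := nonempty_interior_setOf_reachable hf he hL x
  filter_upwards [(isOpen_setOf_exists_reachable hf isOpen_interior).mem_nhds
    ⟨y, hy, mem_ofPred.mp (interior_subset hy)⟩] with x' ⟨y', hy', hx'y'⟩
  have hxy' : Reachable f E x y' := mem_ofPred.mp (interior_subset hy')
  exact (hinv x' y' hx'y').mpr ((hinv x y' hxy').mp hx)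

theorem dense_setOf_exists_reachable (hf : ContDiff ℝ ∞ f)
    (hdiv : ∀ z, LinearMap.trace ℝ V (fderiv ℝ f z) = 0) {H : V → ℝ} (hH : Differentiable ℝ H)
    (hcons : ∀ z, fderiv ℝ H z (f z) = 0) (hproper : ∀ k, 0 < k → IsCompact {z | H z ≤ k})
    (he : ∀ i, e i ∈ E) (hL : ∀ p v : V, ∃ Y, ControlIdeal f e Y ∧ Y p = v) {O : Set V}
    (hO : IsOpen O) (hne : O.Nonempty) : Dense {y | ∃ x ∈ O, Reachable f E x y} := by
  have hWo := isOpen_setOf_exists_reachable_from (E := E) hf hO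
  have hWR : ∀ a ∈ {y | ∃ x ∈ O, Reachable f E x y}, ∀ b, Reachable f E a b →
      b ∈ {y | ∃ x ∈ O, Reachable f E x y} :=
    fun a ⟨x, hx, hxa⟩ b hab => ⟨x, hx, hxa.trans hab⟩
  set W := {y | ∃ x ∈ O, Reachable f E x y}
  have hforward : ∀ a ∈ closure W, ∀ b, Reachable f E a b → b ∈ closure W := fun a ha b =>
    mem_closure_of_rel (fun U => isOpen_setOf_exists_reachable hf)
      (fun a ha b hab => subset_closure (hWR a ha b hab)) ha
  have hjump : ∀ a ∈ closure W, ∀ c ∈ E, a + c ∈ closure W := fun a ha c hc =>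
    closure_minimal (hforward a ha) isClosed_closure (add_mem_closure_setOf_reachable hf a hc)
  have hdrift : ∀ a ∈ closure W, ∀ s > 0, ∀ b, Steers (-f) 0 s a b → b ∈ closure W :=
    fun a ha s hs b => mem_closure_of_rel
      (fun U => isOpen_setOf_exists_steers hf.neg continuous_const hs.le)
      (fun a ha b => mem_closure_of_steers_neg hf hdiv hH hcons hproper hWo
        (fun q hq q' hqq' => hWR q hq q' ⟨s, hs, 0, .zero E s, hqq'⟩) hs.le ha) ha
  have hbackward : ∀ a b, Reachable (-f) E a b → a ∈ closure W → b ∈ closure W :=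
    fun a b ⟨T, hT, u, hu, h⟩ ha =>
      h.mem_of_isClosed hf.neg isClosed_closure hjump hdrift hu.mem hT.le ha
  obtain ⟨x, hx⟩ := hne
  obtain ⟨y, hy⟩ := nonempty_interior_setOf_reachable hf he hL x
  refine dense_iff_closure_eq.mpr <| eq_univ_of_reachable_iff hf he hL isClosed_closure
    ⟨y, subset_closure ⟨x, hx, mem_ofPred.mp (interior_subset hy)⟩⟩
    fun a b hab => ⟨fun ha => hforward a ha b hab, hbackward b a (reachable_neg_iff.mpr hab)⟩

end Density

end ConservativeControl

open ConservativeControl in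
theorem controllability_of_conservative_systems_general {V ι : Type*} [NormedAddCommGroup V]
    [NormedSpace ℝ V] [FiniteDimensional ℝ V] {f : V → V} (hf : ContDiff ℝ ∞ f)
    (hdiv : ∀ z, LinearMap.trace ℝ V (fderiv ℝ f z) = 0) {H : V → ℝ} (hH : Differentiable ℝ H)
    (hcons : ∀ z, fderiv ℝ H z (f z) = 0) (hproper : ∀ K, 0 < K → IsCompact {z | H z ≤ K})
    {E : Submodule ℝ V} {e : ι → V} (he : ∀ i, e i ∈ E)
    (hHorm : ∀ p : V × ℝ, Submodule.span ℝ {v : V × ℝ | ∃ X : V × ℝ → V × ℝ,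
      LieGen ({fun q : V × ℝ => (f q.1, (1 : ℝ))} ∪
        range (fun i : ι => fun _ : V × ℝ => (e i, (0 : ℝ)))) X ∧ X p = v} = ⊤) (x y : V) :
    Reachable f E x y := by
  have hL : ∀ p v, ∃ Y, ControlIdeal f e Y ∧ Y p = v := fun p =>
    ControlIdeal.exists_apply_eq_of_span_lieGen_eq_top hf (hHorm (p, 0))
  have hforward := nonempty_interior_setOf_reachable hf he hL x
  have hbackward := nonempty_interior_setOf_reachable hf.neg he
    (fun p v => (hL p v).imp fun _ hY => ⟨hY.1.neg_drift, hY.2⟩) y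
  obtain ⟨b, hb, a, ha, hab⟩ := (dense_setOf_exists_reachable hf hdiv hH hcons hproper he hL
    isOpen_interior hforward).inter_open_nonempty _ isOpen_interior hbackward
  have hxa : Reachable f E x a := mem_ofPred.mp (interior_subset ha)
  have hyb : Reachable (-f) E y b := mem_ofPred.mp (interior_subset hb)
  exact (hxa.trans hab).trans (reachable_neg_iff.mp hyb)

/-- **Controllability of conservative systems.** If `f` is a smooth divergence-free vector
field on `ℝ^N` with a smooth conserved quantity `H` having compact sublevel sets, `E` is a
linear subspace with basis `e₁,…,eₙ`, and the Lie algebra generated by the time-extended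
vector fields `f̃(z,t) = (f z, 1)`, `ẽᵢ(z,t) = (eᵢ, 0)` spans `ℝ^{N+1}` at every point, then
for all `z₀, z₁` there are a time `T > 0` and a smooth control `u : [0,T] → E` such that the
solution of `ż = f z + u t`, `z 0 = z₀` satisfies `z T = z₁`. -/
theorem controllability_of_conservative_systems
    {N n : ℕ}
    (f : (Fin N → ℝ) → (Fin N → ℝ)) (hf : ContDiff ℝ (⊤ : ℕ∞) f)
    -- `f` is divergence-free
    (hdiv : ∀ z : Fin N → ℝ, ∑ i, fderiv ℝ f z (Pi.single i 1) i = 0)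
    -- `H` is a smooth conserved quantity
    (H : (Fin N → ℝ) → ℝ) (hH : ContDiff ℝ (⊤ : ℕ∞) H)
    (hcons : ∀ z : Fin N → ℝ, fderiv ℝ H z (f z) = 0)
    -- the sublevel sets of `H` are compact
    (hproper : ∀ K : ℝ, 0 < K → IsCompact {z : Fin N → ℝ | H z ≤ K})
    -- `E` is a linear subspace with basis `e₁,…,eₙ`
    (E : Submodule ℝ (Fin N → ℝ)) (e : Fin n → (Fin N → ℝ))
    (he_indep : LinearIndependent ℝ e) (he_span : Submodule.span ℝ (Set.range e) = E)
    -- Hörmander condition for the time-extended vector fields on `ℝ^{N+1} = ℝ^N × ℝ`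
    (hHorm : ∀ p : (Fin N → ℝ) × ℝ,
      Submodule.span ℝ {v : (Fin N → ℝ) × ℝ | ∃ X : (Fin N → ℝ) × ℝ → (Fin N → ℝ) × ℝ,
        LieGen ({fun q : (Fin N → ℝ) × ℝ => (f q.1, (1 : ℝ))} ∪
          Set.range (fun i : Fin n => fun _ : (Fin N → ℝ) × ℝ => (e i, (0 : ℝ)))) X ∧
        X p = v} = ⊤)
    (z₀ z₁ : Fin N → ℝ) :
    ∃ (T : ℝ), 0 < T ∧ ∃ u : ℝ → (Fin N → ℝ), ContDiff ℝ (⊤ : ℕ∞) u ∧ (∀ t, u t ∈ E) ∧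
      ∃ z : ℝ → (Fin N → ℝ), z 0 = z₀ ∧
        (∀ t ∈ Set.Icc (0 : ℝ) T, HasDerivAt z (f (z t) + u t) t) ∧
        z T = z₁ := by
  have htrace : ∀ z, LinearMap.trace ℝ (Fin N → ℝ) (fderiv ℝ f z) = 0 := fun z =>
    (ConservativeControl.trace_eq_sum_apply_single _).trans (hdiv z)
  obtain ⟨T, hT, u, hu, z, hz⟩ := controllability_of_conservative_systems_general hf htrace
    (hH.differentiable (by simp)) hcons hproper
    (fun i => he_span ▸ Submodule.subset_span (mem_range_self i)) hHorm z₀ z₁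
  exact ⟨T, hT, u, hu.contDiff, hu.mem, z, hz⟩
end

section
/- Let H : ℝ^N → [0,∞) be a smooth function whose sublevel sets {z : H(z) ≤ K} are compact for every K > 0, and fix a splitting ℝ^N = ℝ^n × ℝ^m with coordinates (x,y), so that Δ_x H denotes the Laplacian of H in the x variables only. Then there exists a smooth increasing function g : [0,∞) → ℝ with g(0) = 0 such that (i) ∫_{ℝ^N} exp(−g(H(z))) dz < ∞, and (ii) there exists a constant C with exp(−2g(H(z))) · Δ_x H(z) ≤ C + H(z) for every z ∈ ℝ^N. -/
open MeasureTheory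

/-!
Compactness of the sublevel sets bounds every continuous function `F` on each shell
`k + 1 ≤ H ≤ k + 2`, so a smooth staircase `g` that climbs fast enough satisfies `F ≤ g ∘ H + C`,
and then `exp (-g ∘ H) * F ≤ exp C` because `t ≤ exp t`. Taking for `F` the sum of `|Δₓ H|` and a
power of the norm whose inverse is integrable at infinity yields both claims at once.
-/

/-- The smooth function that climbs by `a k` across each interval `[k, k + 1]` and vanishes on
`(-∞, 0]`; it serves as a smooth monotone majorant of step functions. -/
noncomputable def smoothStaircase (a : ℕ → ℝ) (t : ℝ) : ℝ :=
  ∑ᶠ k : ℕ, a k * Real.smoothTransition (t - k)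

section SmoothStaircase

variable {a : ℕ → ℝ} {t : ℝ}

lemma smoothStaircase_eq_sum_range {K : ℕ} (ht : t ≤ K) :
    smoothStaircase a t = ∑ k ∈ Finset.range K, a k * Real.smoothTransition (t - k) := by
  refine finsum_eq_finsetSum_of_support_subset _ fun k hk ↦ ?_
  have hkt : (k : ℝ) < t := by
    by_contra! htk
    exact hk (by simp [Real.smoothTransition.zero_of_nonpos (sub_nonpos.2 htk)])
  exact Finset.mem_coe.2 (Finset.mem_range.2 (by exact_mod_cast hkt.trans_le ht))

lemma smoothStaircase_zero : smoothStaircase a 0 = 0 := by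
  simpa using smoothStaircase_eq_sum_range (a := a) (K := 0) Nat.cast_zero.ge

lemma smoothStaircase_nonneg (ha : ∀ k, 0 ≤ a k) : 0 ≤ smoothStaircase a t :=
  finsum_nonneg fun k ↦ mul_nonneg (ha k) (Real.smoothTransition.nonneg _)

lemma contDiff_smoothStaircase {N : ℕ∞} : ContDiff ℝ N (smoothStaircase a) := by
  refine contDiff_iff_contDiffAt.2 fun t ↦ ?_
  obtain ⟨K, hK⟩ := exists_nat_gt t
  have hsum : ContDiff ℝ N
      fun u : ℝ ↦ ∑ k ∈ Finset.range K, a k * Real.smoothTransition (u - k) := by fun_prop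
  refine hsum.contDiffAt.congr_of_eventuallyEq ?_
  filter_upwards [Iio_mem_nhds hK] with u hu using smoothStaircase_eq_sum_range hu.le

lemma monotone_smoothStaircase (ha : ∀ k, 0 ≤ a k) : Monotone (smoothStaircase a) := by
  intro s t hst
  have ht := Nat.le_ceil t
  rw [smoothStaircase_eq_sum_range (hst.trans ht), smoothStaircase_eq_sum_range ht]
  gcongr with k
  · exact ha k
  · exact Real.smoothTransition.monotone (by gcongr)

lemma le_smoothStaircase (ha : ∀ k, 0 ≤ a k) {k : ℕ} (hk : k + 1 ≤ t) :
    a k ≤ smoothStaircase a t := by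
  have hmem : k ∈ Finset.range ⌈t⌉₊ := Finset.mem_range.2 (Nat.lt_ceil.2 (by linarith))
  calc a k = a k * Real.smoothTransition (t - k) := by
        rw [Real.smoothTransition.one_of_one_le (by linarith), mul_one]
    _ ≤ ∑ j ∈ Finset.range ⌈t⌉₊, a j * Real.smoothTransition (t - j) :=
        Finset.single_le_sum (f := fun j : ℕ ↦ a j * Real.smoothTransition (t - j))
          (fun j _ ↦ mul_nonneg (ha j) (Real.smoothTransition.nonneg _)) hmem
    _ = smoothStaircase a t := (smoothStaircase_eq_sum_range (Nat.le_ceil t)).symm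

end SmoothStaircase

section Majorant

variable {X : Type*} {H F : X → ℝ}

lemma exists_contDiff_monotone_le_comp_add
    (hF : ∀ K : ℝ, 0 < K → BddAbove (F '' {z | H z ≤ K})) :
    ∃ g : ℝ → ℝ, ContDiff ℝ (⊤ : ℕ∞) g ∧ Monotone g ∧ g 0 = 0 ∧ (∀ t, 0 ≤ g t) ∧
      ∃ C, ∀ z, F z ≤ g (H z) + C := by
  have hbound (K : ℝ) (hK : 0 < K) : ∃ M, 0 ≤ M ∧ ∀ z, H z ≤ K → F z ≤ M := by
    obtain ⟨M, hM0, hM⟩ := (hF K hK).exists_ge 0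
    exact ⟨M, hM0, fun z hz ↦ hM _ ⟨z, hz, rfl⟩⟩
  choose a ha0 ha using fun k : ℕ ↦ hbound (k + 2) (by positivity)
  obtain ⟨C, hC0, hC⟩ := hbound 1 one_pos
  refine ⟨smoothStaircase a, contDiff_smoothStaircase, monotone_smoothStaircase ha0,
    smoothStaircase_zero, fun t ↦ smoothStaircase_nonneg ha0, C, fun z ↦ ?_⟩
  rcases le_total (H z) 1 with hz | hz
  · exact (hC z hz).trans (le_add_of_nonneg_left (smoothStaircase_nonneg ha0))
  · have hlower := Nat.floor_le (sub_nonneg.2 hz)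
    have hupper := Nat.lt_floor_add_one (H z - 1)
    have hF_le := ha ⌊H z - 1⌋₊ z (by linarith)
    have hle_g := le_smoothStaircase ha0 (k := ⌊H z - 1⌋₊) (t := H z) (by linarith)
    linarith

lemma exists_contDiff_monotone_exp_neg_comp_mul_le
    (hF : ∀ K : ℝ, 0 < K → BddAbove (F '' {z | H z ≤ K})) :
    ∃ g : ℝ → ℝ, ContDiff ℝ (⊤ : ℕ∞) g ∧ Monotone g ∧ g 0 = 0 ∧ (∀ t, 0 ≤ g t) ∧
      ∃ C, ∀ z, Real.exp (-g (H z)) * F z ≤ C := by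
  obtain ⟨g, hg, hmono, hzero, hnonneg, C, hC⟩ := exists_contDiff_monotone_le_comp_add hF
  refine ⟨g, hg, hmono, hzero, hnonneg, Real.exp C, fun z ↦ ?_⟩
  calc Real.exp (-g (H z)) * F z
      ≤ Real.exp (-g (H z)) * Real.exp (g (H z) + C) := by
        gcongr
        linarith [hC z, Real.add_one_le_exp (g (H z) + C)]
    _ = Real.exp C := by rw [← Real.exp_add, neg_add_cancel_left]

end Majorant

lemma continuous_fderiv_fderiv_apply {𝕜 E F : Type*} [NontriviallyNormedField 𝕜]
    [NormedAddCommGroup E] [NormedSpace 𝕜 E] [NormedAddCommGroup F] [NormedSpace 𝕜 F]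
    {f : E → F} (hf : ContDiff 𝕜 2 f) (v w : E) :
    Continuous fun z ↦ fderiv 𝕜 (fun y ↦ fderiv 𝕜 f y v) z w := by
  have hfv : ContDiff 𝕜 1 fun y ↦ fderiv 𝕜 f y v :=
    (hf.fderiv_right (by norm_num)).clm_apply contDiff_const
  exact (hfv.continuous_fderiv one_ne_zero).clm_apply continuous_const

theorem exists_g_integrable_and_laplacian_bound_general
    {E ι : Type*} [NormedAddCommGroup E] [NormedSpace ℝ E] [MeasurableSpace E] [BorelSpace E]
    [SecondCountableTopology E] [Fintype ι] (μ : Measure E) [μ.HasTemperateGrowth] (v : ι → E)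
    (H : E → ℝ) (hH : ContDiff ℝ 2 H) (hproper : ∀ K : ℝ, 0 < K → IsCompact {z | H z ≤ K}) :
    ∃ g : ℝ → ℝ, ContDiff ℝ (⊤ : ℕ∞) g ∧ Monotone g ∧ g 0 = 0 ∧
      Integrable (fun z ↦ Real.exp (-g (H z))) μ ∧
      ∃ C : ℝ, ∀ z, Real.exp (-2 * g (H z)) *
        |∑ i, fderiv ℝ (fun w ↦ fderiv ℝ H w (v i)) z (v i)| ≤ C := by
  set L : E → ℝ := fun z ↦ ∑ i, fderiv ℝ (fun w ↦ fderiv ℝ H w (v i)) z (v i)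
  have hL : Continuous L :=
    continuous_finsetSum _ fun i _ ↦ continuous_fderiv_fderiv_apply hH (v i) (v i)
  have hweight : Continuous fun z ↦ |L z| + ‖z‖ ^ μ.integrablePower := by fun_prop
  obtain ⟨g, hg, hmono, hzero, hnonneg, C, hC⟩ :=
    exists_contDiff_monotone_exp_neg_comp_mul_le fun K hK ↦
      (hproper K hK).bddAbove_image hweight.continuousOn
  have hdecay (z : E) : ‖z‖ ^ μ.integrablePower * Real.exp (-g (H z)) ≤ C := by
    rw [mul_comm]
    exact (mul_le_mul_of_nonneg_left (le_add_of_nonneg_left (abs_nonneg _))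
      (Real.exp_nonneg _)).trans (hC z)
  refine ⟨g, hg, hmono, hzero, ?_, C, fun z ↦ ?_⟩
  · have hcont : Continuous fun z ↦ Real.exp (-g (H z)) :=
      Real.continuous_exp.comp (hg.continuous.comp hH.continuous).neg
    simpa using integrable_of_le_of_pow_mul_le (μ := μ) (k := 0) (C₁ := 1) (C₂ := C)
      (fun z ↦ by simpa using hnonneg (H z)) (fun z ↦ by simpa using hdecay z)
      hcont.aestronglyMeasurable
  · calc Real.exp (-2 * g (H z)) * |L z|
        ≤ Real.exp (-g (H z)) * (|L z| + ‖z‖ ^ μ.integrablePower) := by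
          gcongr
          · linarith [hnonneg (H z)]
          · exact le_add_of_nonneg_right (by positivity)
      _ ≤ C := hC z

/-- Given a smooth proper nonnegative function `H` on `ℝ^N = ℝ^n × ℝ^m`, there is a smooth
increasing function `g` with `g 0 = 0` such that `exp (-g ∘ H)` is integrable and
`exp (-2 g (H z)) * Δₓ H z ≤ C + H z` for some constant `C`, where `Δₓ` is the Laplacian
in the `x` variables only. -/
theorem exists_g_integrable_and_laplacian_bound
    {n m : ℕ}
    (H : (Fin n → ℝ) × (Fin m → ℝ) → ℝ) (hH : ContDiff ℝ (⊤ : ℕ∞) H)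
    (hHpos : ∀ z, 0 ≤ H z)
    (hproper : ∀ K : ℝ, 0 < K → IsCompact {z : (Fin n → ℝ) × (Fin m → ℝ) | H z ≤ K}) :
    ∃ g : ℝ → ℝ, ContDiffOn ℝ (⊤ : ℕ∞) g (Set.Ici 0) ∧ MonotoneOn g (Set.Ici 0) ∧ g 0 = 0 ∧
      Integrable (fun z : (Fin n → ℝ) × (Fin m → ℝ) => Real.exp (-g (H z))) volume ∧
      ∃ C : ℝ, ∀ z : (Fin n → ℝ) × (Fin m → ℝ),
        Real.exp (-2 * g (H z)) *
            (∑ i, fderiv ℝ (fun w => fderiv ℝ H w ((Pi.single i 1, 0) :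
              (Fin n → ℝ) × (Fin m → ℝ))) z ((Pi.single i 1, 0) :
              (Fin n → ℝ) × (Fin m → ℝ)))
          ≤ C + H z := by
  have : (volume : Measure ((Fin n → ℝ) × (Fin m → ℝ))).IsAddHaarMeasure :=
    Measure.prod.instIsAddHaarMeasure _ _
  obtain ⟨g, hg, hmono, hzero, hint, C, hC⟩ :=
    exists_g_integrable_and_laplacian_bound_general volume
      (fun i ↦ (Pi.single i 1, 0)) H (hH.of_le (by norm_cast)) hproper
  refine ⟨g, hg.contDiffOn, hmono.monotoneOn _, hzero, hint, C, fun z ↦ ?_⟩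
  exact (mul_le_mul_of_nonneg_left (le_abs_self _) (Real.exp_nonneg _)).trans
    ((hC z).trans (le_add_of_nonneg_right (hHpos z)))
end

section
/- Let f : ℝ^N → ℝ^N be a smooth divergence-free vector field, let H : ℝ^N → ℝ be smooth with ⟨∇H(z), f(z)⟩ = 0 for all z ∈ ℝ^N, fix a splitting ℝ^N = ℝ^n × ℝ^m with coordinates (x,y), and let g : ℝ → ℝ be smooth. Define ρ(z) = exp(−g(H(z))). Then ρ satisfies the stationary Fokker–Planck identity: −∇·(f ρ) + ∇_x·( g′(H) e^{−2g(H)} ρ ∇_x H ) + ∇_x·( e^{−2g(H)} ∇_x ρ ) = 0 at every point of ℝ^N, where ∇_x· denotes the divergence taken in the x variables and ∇_x the gradient in the x variables. -/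
noncomputable section

/-- The phase space `ℝ^N = ℝ^n × ℝ^m` with coordinates `(x, y)`. -/
abbrev Phase (n m : ℕ) := (Fin n → ℝ) × (Fin m → ℝ)

/-- The `i`-th coordinate direction in the `x` variables. -/
def ex (n m : ℕ) (i : Fin n) : Phase n m := (Pi.single i 1, 0)

/-- The `j`-th coordinate direction in the `y` variables. -/
def ey (n m : ℕ) (j : Fin m) : Phase n m := (0, Pi.single j 1)

/-- The gradient in the `x` variables of a scalar function. -/
def gradx {n m : ℕ} (F : Phase n m → ℝ) (z : Phase n m) : Fin n → ℝ :=
  fun i => fderiv ℝ F z (ex n m i)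

/-- The divergence in the `x` variables of an `ℝ^n`-valued function. -/
def divx {n m : ℕ} (F : Phase n m → (Fin n → ℝ)) (z : Phase n m) : ℝ :=
  ∑ i, fderiv ℝ F z (ex n m i) i

/-- The full divergence of a vector field on `ℝ^n × ℝ^m`. -/
def divFull {n m : ℕ} (F : Phase n m → Phase n m) (z : Phase n m) : ℝ :=
  (∑ i, (fderiv ℝ F z (ex n m i)).1 i) + ∑ j, (fderiv ℝ F z (ey n m j)).2 j

/-!
Since `ρ` is a function of the conserved quantity `H`, the flow of the divergence-free field `f`
transports it without change, so `∇·(f ρ) = ⟨∇ρ, f⟩ + ρ ∇·f = 0`. The remaining two terms balance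
before any divergence is taken: `∇ₓρ = -g'(H) ρ ∇ₓH`, so for any scalar diffusion coefficient `a`
the drift flux `a g'(H) ρ ∇ₓH` and the diffusive flux `a ∇ₓρ` add up to zero.
-/

section

variable {n m : ℕ} {z : Phase n m} {H : Phase n m → ℝ}

theorem sum_smul_ex_add_sum_smul_ey (v : Phase n m) :
    ∑ i, v.1 i • ex n m i + ∑ j, v.2 j • ey n m j = v := by
  ext k <;> simp [ex, ey, Prod.fst_sum, Prod.snd_sum, Pi.single_apply]

theorem sum_mul_apply_ex_add_sum_mul_apply_ey (L : Phase n m →L[ℝ] ℝ) (v : Phase n m) :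
    ∑ i, v.1 i * L (ex n m i) + ∑ j, v.2 j * L (ey n m j) = L v := by
  conv_rhs => rw [← sum_smul_ex_add_sum_smul_ey v]
  simp only [map_add, map_sum, map_smul, smul_eq_mul]

theorem divFull_smul {ρ : Phase n m → ℝ} {f : Phase n m → Phase n m}
    (hρ : DifferentiableAt ℝ ρ z) (hf : DifferentiableAt ℝ f z) :
    divFull (fun w => ρ w • f w) z = ρ z * divFull f z + fderiv ℝ ρ z (f z) := by
  rw [← sum_mul_apply_ex_add_sum_mul_apply_ey (fderiv ℝ ρ z)]
  simp only [divFull, fderiv_fun_smul hρ hf, add_apply, smul_apply,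
    ContinuousLinearMap.smulRight_apply, Prod.fst_add, Prod.snd_add, Prod.smul_fst, Prod.smul_snd,
    Pi.add_apply, Pi.smul_apply, smul_eq_mul, Finset.sum_add_distrib, ← Finset.mul_sum,
    mul_comm (fderiv ℝ ρ z _)]
  ring

theorem divx_add {F G : Phase n m → Fin n → ℝ}
    (hF : DifferentiableAt ℝ F z) (hG : DifferentiableAt ℝ G z) :
    divx (F + G) z = divx F z + divx G z := by
  simp only [divx, fderiv_add hF hG, add_apply, Pi.add_apply, Finset.sum_add_distrib]

theorem divx_zero : divx (0 : Phase n m → Fin n → ℝ) z = 0 := by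
  simp [divx]

theorem fderiv_comp_eq_deriv_smul {𝕜 E : Type*} [NontriviallyNormedField 𝕜]
    [NormedAddCommGroup E] [NormedSpace 𝕜 E] {φ : 𝕜 → 𝕜} {u : E → 𝕜} {x : E}
    (hφ : DifferentiableAt 𝕜 φ (u x)) (hu : DifferentiableAt 𝕜 u x) :
    fderiv 𝕜 (φ ∘ u) x = deriv φ (u x) • fderiv 𝕜 u x :=
  (hφ.hasDerivAt.comp_hasFDerivAt x hu.hasFDerivAt).fderiv

theorem gradx_comp {φ : ℝ → ℝ}
    (hφ : DifferentiableAt ℝ φ (H z)) (hH : DifferentiableAt ℝ H z) :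
    gradx (φ ∘ H) z = deriv φ (H z) • gradx H z := by
  ext i
  simp only [gradx, fderiv_comp_eq_deriv_smul hφ hH, smul_apply, Pi.smul_apply]

theorem divFull_comp_smul_eq_zero {φ : ℝ → ℝ} {f : Phase n m → Phase n m}
    (hφ : DifferentiableAt ℝ φ (H z)) (hH : DifferentiableAt ℝ H z)
    (hf : DifferentiableAt ℝ f z) (hdiv : divFull f z = 0) (hcons : fderiv ℝ H z (f z) = 0) :
    divFull (fun w => (φ ∘ H) w • f w) z = 0 := by
  rw [divFull_smul (hφ.comp z hH) hf, fderiv_comp_eq_deriv_smul hφ hH, smul_apply,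
    hdiv, hcons, mul_zero, smul_zero, add_zero]

theorem gradx_exp_neg_comp {g : ℝ → ℝ}
    (hg : DifferentiableAt ℝ g (H z)) (hH : DifferentiableAt ℝ H z) :
    gradx (fun w => Real.exp (-g (H w))) z =
      -((deriv g (H z) * Real.exp (-g (H z))) • gradx H z) := by
  have hexp : HasDerivAt (fun t => Real.exp (-g t))
      (Real.exp (-g (H z)) * -deriv g (H z)) (H z) :=
    hg.hasDerivAt.fun_neg.exp
  calc
    gradx (fun w => Real.exp (-g (H w))) z
        = deriv (fun t => Real.exp (-g t)) (H z) • gradx H z :=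
      gradx_comp hexp.differentiableAt hH
    _ = -((deriv g (H z) * Real.exp (-g (H z))) • gradx H z) := by
      rw [hexp.deriv]
      module

theorem drift_flux_add_diffusive_flux_eq_zero {g : ℝ → ℝ}
    (hg : DifferentiableAt ℝ g (H z)) (hH : DifferentiableAt ℝ H z) (a : ℝ) :
    (deriv g (H z) * a * Real.exp (-g (H z))) • gradx H z +
      a • gradx (fun w => Real.exp (-g (H w))) z = 0 := by
  rw [gradx_exp_neg_comp hg hH]
  module

theorem differentiable_gradx (hH : ContDiff ℝ 2 H) : Differentiable ℝ (gradx H) := by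
  have hH' : Differentiable ℝ (fderiv ℝ H) :=
    (hH.fderiv_right (m := 1) (by norm_num)).differentiable one_ne_zero
  exact differentiable_pi.2 fun i => hH'.clm_apply (differentiable_const (ex n m i))

theorem stationary_fokkerPlanck_general {f : Phase n m → Phase n m}
    (hf : DifferentiableAt ℝ f z) (hdiv : divFull f z = 0)
    (hH : ContDiff ℝ 2 H) (hcons : fderiv ℝ H z (f z) = 0)
    {g : ℝ → ℝ} (hg : ContDiff ℝ 2 g) {a : Phase n m → ℝ} (ha : DifferentiableAt ℝ a z) :
    -divFull (fun w => Real.exp (-g (H w)) • f w) z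
      + divx (fun w => (deriv g (H w) * a w * Real.exp (-g (H w))) • gradx H w) z
      + divx (fun w => a w • gradx (fun w => Real.exp (-g (H w))) w) z = 0 := by
  have hHd : Differentiable ℝ H := hH.differentiable two_ne_zero
  have hgd : Differentiable ℝ g := hg.differentiable two_ne_zero
  have hg' : Differentiable ℝ (deriv g) := hg.differentiable_deriv_two
  have hρ : ContDiff ℝ 2 fun w => Real.exp (-g (H w)) := (hg.comp hH).neg.exp
  have hdrift : DifferentiableAt ℝ
      (fun w => (deriv g (H w) * a w * Real.exp (-g (H w))) • gradx H w) z :=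
    (((hg'.comp hHd z).mul ha).mul (hρ.differentiable two_ne_zero z)).smul
      (differentiable_gradx hH z)
  have hdiffusion : DifferentiableAt ℝ
      (fun w => a w • gradx (fun w => Real.exp (-g (H w))) w) z :=
    ha.smul (differentiable_gradx hρ z)
  have htransport : divFull (fun w => Real.exp (-g (H w)) • f w) z = 0 :=
    divFull_comp_smul_eq_zero (φ := fun t => Real.exp (-g t)) (hgd (H z)).neg.exp (hHd z)
      hf hdiv hcons
  have hbalance : (fun w => (deriv g (H w) * a w * Real.exp (-g (H w))) • gradx H w) +
      (fun w => a w • gradx (fun w => Real.exp (-g (H w))) w) = 0 :=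
    funext fun w => drift_flux_add_diffusive_flux_eq_zero (hgd (H w)) (hHd w) (a w)
  rw [htransport, neg_zero, zero_add, ← divx_add hdrift hdiffusion, hbalance, divx_zero]

end

/-- **Stationary Fokker–Planck identity.** If `f` is smooth and divergence-free, `H` is a
smooth conserved quantity for `f`, and `g : ℝ → ℝ` is smooth, then `ρ = exp (-g ∘ H)`
satisfies `-∇·(f ρ) + ∇ₓ·(g'(H) e^{-2g(H)} ρ ∇ₓH) + ∇ₓ·(e^{-2g(H)} ∇ₓρ) = 0` everywhere. -/
theorem stationary_fokkerPlanck
    {n m : ℕ}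
    (f : Phase n m → Phase n m) (hf : ContDiff ℝ (⊤ : ℕ∞) f)
    (hdiv : ∀ z, divFull f z = 0)
    (H : Phase n m → ℝ) (hH : ContDiff ℝ (⊤ : ℕ∞) H)
    (hcons : ∀ z, fderiv ℝ H z (f z) = 0)
    (g : ℝ → ℝ) (hg : ContDiff ℝ (⊤ : ℕ∞) g)
    (ρ : Phase n m → ℝ) (hρ : ρ = fun z => Real.exp (-g (H z))) :
    ∀ z : Phase n m,
      -divFull (fun w => ρ w • f w) z
        + divx (fun w => (deriv g (H w) * Real.exp (-2 * g (H w)) * ρ w) • gradx H w) z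
        + divx (fun w => Real.exp (-2 * g (H w)) • gradx ρ w) z = 0 := by
  subst hρ
  exact fun z => stationary_fokkerPlanck_general (hf.differentiable (by simp) z) (hdiv z)
    (contDiff_infty.1 hH 2) (hcons z) (contDiff_infty.1 hg 2)
    (((hg.comp hH).differentiable (by simp) z).const_mul (-2)).exp

end
end

section
/- Let g : ℝ → [−1,1] be a differentiable odd function with g′(x) > 0 for all x, and let φ : ℝ → [0,1] be a function with φ(y) = 0 for |y| ≤ 2 and φ(y) = 1 for |y| ≥ 3. Consider the control system on ℝ²: ẋ = u(t) − x, ẏ = g(y + g(x)) − y φ(y), where u is any continuous control. Then for every y ∈ (1,2) and every x ∈ ℝ one has g(y + g(x)) − y φ(y) > 0; consequently, every solution (x(t), y(t)) on [0,T] with y(0) > 1 satisfies y(t) > 1 for all t ∈ [0,T]. In particular, no control can steer a point with y-coordinate greater than 1 to a point with y-coordinate less than or equal to 1, so the system is not approximately controllable. -/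
/-!
If the velocity of a curve `y` is positive whenever `y ∈ (a, b)`, then `y` cannot come down to `a`:
a level `c ∈ (a, b)` below its starting point can only be crossed upwards. In the control system
`g ≥ -1` makes `y + g(x)` positive for every `x` once `y > 1`, and `φ` vanishes on `(1, 2)`, so the
velocity of `y` is positive there whatever `x`, and hence the control, does.
-/

open Set

section BarrierCrossing

variable {f f' : ℝ → ℝ} {s T : ℝ}

theorem le_image_of_deriv_right_pos_at_level {c : ℝ}
    (hcont : ContinuousOn f (Icc s T))
    (hderiv : ∀ t ∈ Ico s T, HasDerivWithinAt f (f' t) (Ici t) t)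
    (hstart : c ≤ f s) (hlevel : ∀ t ∈ Ico s T, f t = c → 0 < f' t) :
    ∀ t ∈ Icc s T, c ≤ f t := by
  intro t ht
  refine neg_le_neg_iff.mp <| image_le_of_deriv_right_lt_deriv_boundary'
    (f := fun r ↦ -f r) (B := fun _ ↦ -c) hcont.neg (fun r hr ↦ (hderiv r hr).neg)
    (neg_le_neg hstart) continuousOn_const (fun r _ ↦ hasDerivWithinAt_const r (Ici r) (-c)) ?_ ht
  intro r hr hrc
  exact neg_neg_iff_pos.mpr (hlevel r hr (neg_injective hrc))

theorem lt_image_of_deriv_right_pos_on_Ioo {a b : ℝ} (hab : a < b)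
    (hcont : ContinuousOn f (Icc s T))
    (hderiv : ∀ t ∈ Ico s T, HasDerivWithinAt f (f' t) (Ici t) t)
    (hstart : a < f s) (hpos : ∀ t ∈ Ico s T, f t ∈ Ioo a b → 0 < f' t) :
    ∀ t ∈ Icc s T, a < f t := by
  obtain ⟨c, hac, hc⟩ : ∃ c, a < c ∧ c < min (f s) b := exists_between (lt_min hstart hab)
  obtain ⟨hcs, hcb⟩ := lt_min_iff.mp hc
  have hlevel : ∀ t ∈ Ico s T, f t = c → 0 < f' t :=
    fun t ht htc ↦ hpos t ht (htc ▸ ⟨hac, hcb⟩)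
  exact fun t ht ↦
    hac.trans_le (le_image_of_deriv_right_pos_at_level hcont hderiv hcs.le hlevel t ht)

end BarrierCrossing

theorem pos_of_odd_of_strictMono {α β : Type*} [NegZeroClass α] [Preorder α]
    [AddCommGroup β] [IsAddTorsionFree β] [Preorder β] {g : α → β}
    (hodd : g.Odd) (hmono : StrictMono g) {r : α} (hr : 0 < r) : 0 < g r :=
  hodd.map_zero ▸ hmono hr

/-- The signal `x` is arbitrary, possibly discontinuous, which is why `y` is only required to have
right derivatives. -/
theorem counterexample_not_approximately_controllable_general
    {g φ : ℝ → ℝ} {a b : ℝ} (hab : a < b)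
    (hpos : ∀ r, 0 < r → 0 < g r) (hlow : ∀ r, -a ≤ g r) (hφ : ∀ r ∈ Ioo a b, φ r = 0) :
    (∀ y ∈ Ioo a b, ∀ x : ℝ, 0 < g (y + g x) - y * φ y) ∧
      ∀ (T : ℝ) (x y : ℝ → ℝ), ContinuousOn y (Icc 0 T) →
        (∀ t ∈ Ico 0 T,
          HasDerivWithinAt y (g (y t + g (x t)) - y t * φ (y t)) (Ici t) t) →
        a < y 0 → ∀ t ∈ Icc 0 T, a < y t := by
  have drift_pos : ∀ y ∈ Ioo a b, ∀ x : ℝ, 0 < g (y + g x) - y * φ y := by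
    intro y hy x
    have hsum : 0 < y + g x := by linarith [hy.1, hlow x]
    simpa only [hφ y hy, mul_zero, sub_zero] using hpos _ hsum
  exact ⟨drift_pos, fun T x y hcont hderiv hstart ↦
    lt_image_of_deriv_right_pos_on_Ioo hab hcont hderiv hstart
      fun t _ hyt ↦ drift_pos (y t) hyt (x t)⟩

/-- For the control system `ẋ = u(t) - x`, `ẏ = g(y + g(x)) - y φ(y)` with `g` odd, strictly
increasing and `[-1,1]`-valued, and `φ` vanishing on `{|y| ≤ 2}`: one has
`g(y + g(x)) - y φ(y) > 0` whenever `y ∈ (1,2)`, and consequently every solution starting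
with `y(0) > 1` keeps `y(t) > 1` forever, whatever the control is; so the system is not
approximately controllable. -/
theorem counterexample_not_approximately_controllable
    (g : ℝ → ℝ) (hg : Differentiable ℝ g)
    (hodd : ∀ x, g (-x) = -g x)
    (hrange : ∀ x, g x ∈ Set.Icc (-1 : ℝ) 1)
    (hg' : ∀ x, 0 < deriv g x)
    (φ : ℝ → ℝ)
    (hφrange : ∀ y, φ y ∈ Set.Icc (0 : ℝ) 1)
    (hφ0 : ∀ y : ℝ, |y| ≤ 2 → φ y = 0)
    (hφ1 : ∀ y : ℝ, 3 ≤ |y| → φ y = 1) :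
    (∀ y ∈ Set.Ioo (1 : ℝ) 2, ∀ x : ℝ, 0 < g (y + g x) - y * φ y) ∧
      ∀ (T : ℝ), 0 ≤ T → ∀ (u : ℝ → ℝ), Continuous u →
        ∀ x y : ℝ → ℝ,
          (∀ t ∈ Set.Icc (0 : ℝ) T, HasDerivAt x (u t - x t) t) →
          (∀ t ∈ Set.Icc (0 : ℝ) T, HasDerivAt y (g (y t + g (x t)) - y t * φ (y t)) t) →
          1 < y 0 → ∀ t ∈ Set.Icc (0 : ℝ) T, 1 < y t := by
  have hφ : ∀ r ∈ Ioo (1 : ℝ) 2, φ r = 0 := fun r hr ↦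
    hφ0 r (abs_le.mpr ⟨by linarith [hr.1], hr.2.le⟩)
  obtain ⟨drift_pos, invariance⟩ := counterexample_not_approximately_controllable_general
    one_lt_two (fun _ ↦ pos_of_odd_of_strictMono hodd (strictMono_of_deriv_pos hg'))
    (fun r ↦ (hrange r).1) hφ
  exact ⟨drift_pos, fun T _ _ _ x y _ hy ↦ invariance T x y (HasDerivAt.continuousOn hy)
    fun t ht ↦ (hy t (Ico_subset_Icc_self ht)).hasDerivWithinAt⟩
end

section
/- Let g : ℝ → ℝ and φ : ℝ → ℝ be smooth, with g′(x) > 0 for all x ∈ ℝ. On ℝ² define the smooth vector fields X(x,y) = (1, 0) and F(x,y) = (−x, g(y + g(x)) − y φ(y)). Then the Lie bracket [X, F] is given by [X, F](x,y) = (−1, g′(y + g(x)) · g′(x)) at every point (x,y) ∈ ℝ², and for every point (x,y) ∈ ℝ² the two vectors X(x,y) and [X,F](x,y) are linearly independent, hence span ℝ². -/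
/-!
Bracketing with the constant field `(1, 0)` is partial differentiation in the first variable, so
the term `y φ(y)` contributes nothing to `[X, F]`, and the second component of `[X, F]` comes from
the chain rule alone. That component is a product of two values of `g'`, hence never zero.
-/

lemma lieBracket_const_left {V : Type*} [NormedAddCommGroup V] [NormedSpace ℝ V]
    (v : V) (Y : V → V) (z : V) :
    lieBracket (fun _ => v) Y z = fderiv ℝ Y z v := by
  simp [lieBracket]

lemma fderiv_apply_one_zero {𝕜 E F : Type*} [NontriviallyNormedField 𝕜]
    [NormedAddCommGroup E] [NormedSpace 𝕜 E] [NormedAddCommGroup F] [NormedSpace 𝕜 F]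
    {f : 𝕜 × E → F} {p : 𝕜 × E} (hf : DifferentiableAt 𝕜 f p) :
    fderiv 𝕜 f p (1, 0) = deriv (fun x => f (x, p.2)) p.1 := by
  have horizontal_line : HasDerivAt (fun x : 𝕜 => (x, p.2)) (1, 0) p.1 :=
    (hasDerivAt_id p.1).prodMk (hasDerivAt_const p.1 p.2)
  exact (hf.hasFDerivAt.comp_hasDerivAt p.1 horizontal_line).deriv.symm

lemma lieBracket_one_zero_left {E : Type*} [NormedAddCommGroup E] [NormedSpace ℝ E]
    {F : ℝ × E → ℝ × E} {p : ℝ × E} (hF : DifferentiableAt ℝ F p) :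
    lieBracket (fun _ => (1, 0)) F p = deriv (fun x => F (x, p.2)) p.1 := by
  rw [lieBracket_const_left, fderiv_apply_one_zero hF]

lemma linearIndependent_pair_one_zero_iff {R : Type*} [Ring R] [IsDomain R] {a c : R} :
    LinearIndependent R ![((1 : R), (0 : R)), (a, c)] ↔ c ≠ 0 := by
  simp only [LinearIndependent.pair_iff, Prod.smul_mk, Prod.mk_add_mk, Prod.mk_eq_zero,
    smul_eq_mul, mul_one, mul_zero, zero_add]
  refine ⟨fun h hc => one_ne_zero (h (-a) 1 (by simp [hc])).2, fun hc s t ⟨hst, htc⟩ => ?_⟩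
  have ht : t = 0 := (mul_eq_zero.mp htc).resolve_right hc
  exact ⟨by simpa [ht] using hst, ht⟩

lemma span_pair_eq_top_of_linearIndependent {K V : Type*} [DivisionRing K] [AddCommGroup V]
    [Module K V] (hV : Module.finrank K V = 2) {u v : V} (h : LinearIndependent K ![u, v]) :
    Submodule.span K {u, v} = ⊤ := by
  rw [← Matrix.range_cons_cons_empty u v ![]]
  exact h.span_eq_top_of_card_eq_finrank (by simp [hV])

lemma lieBracket_one_zero_neg_comp_add_comp_sub {g ψ : ℝ → ℝ} {p : ℝ × ℝ}
    (hg : DifferentiableAt ℝ g p.1) (hg₂ : DifferentiableAt ℝ g (p.2 + g p.1))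
    (hψ : DifferentiableAt ℝ ψ p.2) :
    lieBracket (fun _ => (1, 0)) (fun q => (-q.1, g (q.2 + g q.1) - ψ q.2)) p =
      (-1, deriv g (p.2 + g p.1) * deriv g p.1) := by
  have differentiableAt_field :
      DifferentiableAt ℝ (fun q : ℝ × ℝ => (-q.1, g (q.2 + g q.1) - ψ q.2)) p := by
    fun_prop
  have hasDerivAt_comp : HasDerivAt (fun x => g (p.2 + g x))
      (deriv g (p.2 + g p.1) * deriv g p.1) p.1 :=
    hg₂.hasDerivAt.comp p.1 (hg.hasDerivAt.const_add p.2)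
  rw [lieBracket_one_zero_left differentiableAt_field]
  exact ((hasDerivAt_neg p.1).prodMk (hasDerivAt_comp.sub_const (ψ p.2))).deriv

theorem lieBracket_spans_counterexample_general
    (g φ : ℝ → ℝ) (hg : Differentiable ℝ g) (hφ : Differentiable ℝ φ)
    (hg' : ∀ x, deriv g x ≠ 0)
    (X F : ℝ × ℝ → ℝ × ℝ)
    (hX : X = fun _ => ((1 : ℝ), (0 : ℝ)))
    (hF : F = fun p => (-p.1, g (p.2 + g p.1) - p.2 * φ p.2)) :
    (∀ p : ℝ × ℝ, lieBracket X F p = (-1, deriv g (p.2 + g p.1) * deriv g p.1)) ∧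
      ∀ p : ℝ × ℝ, LinearIndependent ℝ ![X p, lieBracket X F p] ∧
        Submodule.span ℝ {X p, lieBracket X F p} = (⊤ : Submodule ℝ (ℝ × ℝ)) := by
  have bracket_eq (p : ℝ × ℝ) :
      lieBracket X F p = (-1, deriv g (p.2 + g p.1) * deriv g p.1) := by
    subst hX hF
    exact lieBracket_one_zero_neg_comp_add_comp_sub (ψ := fun y => y * φ y) (hg _) (hg _)
      (differentiableAt_id.mul (hφ _))
  have linearIndependent_bracket (p : ℝ × ℝ) :
      LinearIndependent ℝ ![X p, lieBracket X F p] := by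
    rw [bracket_eq, hX]
    exact linearIndependent_pair_one_zero_iff.mpr (mul_ne_zero (hg' _) (hg' _))
  exact ⟨bracket_eq, fun p => ⟨linearIndependent_bracket p,
    span_pair_eq_top_of_linearIndependent (by simp) (linearIndependent_bracket p)⟩⟩

/-- For the vector fields `X(x,y) = (1,0)` and `F(x,y) = (-x, g(y + g(x)) - y φ(y))` on `ℝ²`,
with `g, φ` smooth and `g' > 0`, the Lie bracket is
`[X,F](x,y) = (-1, g'(y + g(x)) g'(x))`, and at every point `X` and `[X,F]` are linearly
independent, hence span `ℝ²`. -/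
theorem lieBracket_spans_counterexample
    (g φ : ℝ → ℝ) (hg : ContDiff ℝ (⊤ : ℕ∞) g) (hφ : ContDiff ℝ (⊤ : ℕ∞) φ)
    (hg' : ∀ x, 0 < deriv g x)
    (X F : ℝ × ℝ → ℝ × ℝ)
    (hX : X = fun _ => ((1 : ℝ), (0 : ℝ)))
    (hF : F = fun p => (-p.1, g (p.2 + g p.1) - p.2 * φ p.2)) :
    (∀ p : ℝ × ℝ, lieBracket X F p = (-1, deriv g (p.2 + g p.1) * deriv g p.1)) ∧
      ∀ p : ℝ × ℝ, LinearIndependent ℝ ![X p, lieBracket X F p] ∧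
        Submodule.span ℝ {X p, lieBracket X F p} = (⊤ : Submodule ℝ (ℝ × ℝ)) :=
  lieBracket_spans_counterexample_general g φ (hg.differentiable (by simp))
    (hφ.differentiable (by simp)) (fun x => (hg' x).ne') X F hX hF
end

section
/- Fix N⋆ ∈ ℕ and let Λ = {k ∈ ℤ³ : k ≠ 0 and |k_j| ≤ N⋆ for j = 1,2,3}. For u = (u_k)_{k∈Λ} with u_k ∈ ℂ³, define the Galerkin–Euler vector field B by B_k(u) = −i ∑_{h,ℓ ∈ Λ, h+ℓ=k} (k · u_h) ( u_ℓ − ((k · u_ℓ)/|k|²) k ) for k ∈ Λ, where k · v = ∑_j k_j v_j. Then for every u satisfying the reality condition u_{−k} = conj(u_k) and the incompressibility condition k · u_k = 0 for all k ∈ Λ, the total energy ∑_{k∈Λ} |u_k|² is conserved by the flow of B; equivalently, ∑_{k∈Λ} Re( ⟨u_k, B_k(u)⟩ ) = 0, where ⟨a,b⟩ = ∑_{j=1}^3 conj(a_j) b_j. -/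
open scoped BigOperators

/-- The finite set `Λ = {k ∈ ℤ³ : k ≠ 0, |k_j| ≤ N⋆ for all j}` of retained Fourier modes. -/
noncomputable def eulerModes (Nstar : ℕ) : Finset (Fin 3 → ℤ) :=
  (Fintype.piFinset fun _ : Fin 3 => Finset.Icc (-(Nstar : ℤ)) (Nstar : ℤ)).filter (· ≠ 0)

/-- The pairing `k · v = ∑_j k_j v_j` of an integer wave vector with a complex vector. -/
noncomputable def eulerDot (k : Fin 3 → ℤ) (v : Fin 3 → ℂ) : ℂ := ∑ j, (k j : ℂ) * v j

/-- The Galerkin–Euler vector field: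
`B_k(u) = -i ∑_{h+ℓ=k, h,ℓ∈Λ} (k·u_h) (u_ℓ - ((k·u_ℓ)/|k|²) k)`. -/
noncomputable def eulerB (Nstar : ℕ) (u : (Fin 3 → ℤ) → Fin 3 → ℂ) (k : Fin 3 → ℤ) :
    Fin 3 → ℂ := fun j =>
  -Complex.I * ∑ h ∈ eulerModes Nstar, ∑ l ∈ eulerModes Nstar,
    if h + l = k then
      eulerDot k (u h) * (u l j - eulerDot k (u l) / (∑ j', (k j' : ℂ) ^ 2) * (k j : ℂ))
    else 0

/-!
Since `u_{-k}` is the conjugate of `u_k`, the Hermitian product `⟨u_k, B_k(u)⟩` is the bilinear one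
`u_{-k} · B_k(u)`, from which the pressure drops out because `k · u_{-k} = 0`. With `p = -k`, what
remains is the sum, over triads `p + h + l = 0`, of the transfer `(p · u_h)(u_p · u_l)` from mode
`l` to mode `p` carried by mode `h`. Since `(p + l) · u_h = -(h · u_h) = 0`, exchanging `p` and `l`
reverses the sign of the transfer, so the total vanishes.
-/

theorem sum_sum_eq_zero_of_antisymm {α M : Type*} [AddCommGroup M] [IsAddTorsionFree M]
    {s : Finset α} {f : α → α → M} (hf : ∀ x ∈ s, ∀ y ∈ s, f y x = -f x y) :
    ∑ x ∈ s, ∑ y ∈ s, f x y = 0 := by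
  refine self_eq_neg.mp ?_
  calc ∑ x ∈ s, ∑ y ∈ s, f x y
      = ∑ x ∈ s, ∑ y ∈ s, f y x := Finset.sum_comm
    _ = ∑ x ∈ s, ∑ y ∈ s, -f x y :=
        Finset.sum_congr rfl fun x hx => Finset.sum_congr rfl fun y hy => hf x hx y hy
    _ = -∑ x ∈ s, ∑ y ∈ s, f x y := by simp only [Finset.sum_neg_distrib]

section WaveVectors

variable {ι R : Type*} [Fintype ι]

/-- The pairing `k · v` of a wave vector `k ∈ ℤ^ι` with a vector `v` over any ring, in which the
coordinates of `k` are read through the cast from `ℤ`. -/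
def waveDot [Ring R] (k : ι → ℤ) (v : ι → R) : R := (fun j => (k j : R)) ⬝ᵥ v

theorem waveDot_add [Ring R] (k l : ι → ℤ) (v : ι → R) :
    waveDot (k + l) v = waveDot k v + waveDot l v := by
  simp [waveDot, dotProduct, add_mul, Finset.sum_add_distrib]

theorem waveDot_neg [Ring R] (k : ι → ℤ) (v : ι → R) : waveDot (-k) v = -waveDot k v := by
  simp [waveDot, dotProduct]

/-- The Leray projection `v - ((k · v) / |k|²) k` of a Fourier coefficient at the wave vector `k`,
which removes the pressure gradient. Division by zero makes it the identity at `k = 0`. -/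
def lerayProj [Field R] (k : ι → ℤ) (v : ι → R) : ι → R :=
  v - (waveDot k v / ∑ j, (k j : R) ^ 2) • fun j => (k j : R)

theorem dotProduct_lerayProj [Field R] {k : ι → ℤ} {w : ι → R} (hw : waveDot k w = 0)
    (v : ι → R) : w ⬝ᵥ lerayProj k v = w ⬝ᵥ v := by
  rw [waveDot, dotProduct_comm] at hw
  rw [lerayProj, dotProduct_sub, dotProduct_smul, hw, smul_zero, sub_zero]

/-- The energy transfer `(p · u_h)(u_p · u_l)` from mode `l` to mode `p` carried by mode `h`,
meaningful for triads `p + h + l = 0`. The product `u_p · u_l` is bilinear, not Hermitian. -/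
def triadTransfer [CommRing R] (u : (ι → ℤ) → ι → R) (p h l : ι → ℤ) : R :=
  waveDot p (u h) * (u p ⬝ᵥ u l)

theorem triadTransfer_swap [CommRing R] {u : (ι → ℤ) → ι → R} {p h l : ι → ℤ}
    (hdiv : waveDot h (u h) = 0) (htriad : p + h + l = 0) :
    triadTransfer u l h p = -triadTransfer u p h l := by
  have hl : l = -(p + h) := eq_neg_of_add_eq_zero_right htriad
  have hdot : waveDot l (u h) = -waveDot p (u h) := by
    rw [hl, waveDot_neg, waveDot_add, hdiv, add_zero]
  rw [triadTransfer, triadTransfer, hdot, dotProduct_comm, neg_mul]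

theorem sum_triadTransfer_eq_zero [CommRing R] [IsAddTorsionFree R] {Λ : Finset (ι → ℤ)}
    {u : (ι → ℤ) → ι → R} (hdiv : ∀ k ∈ Λ, waveDot k (u k) = 0) :
    ∑ p ∈ Λ, ∑ h ∈ Λ, ∑ l ∈ Λ with p + h + l = 0, triadTransfer u p h l = 0 := by
  rw [Finset.sum_comm]
  refine Finset.sum_eq_zero fun h hh => ?_
  simp only [Finset.sum_filter]
  refine sum_sum_eq_zero_of_antisymm fun p _ l _ => ?_
  have hcomm : l + h + p = p + h + l := by abel
  rw [hcomm]
  split_ifs with htriad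
  · exact triadTransfer_swap (hdiv h hh) htriad
  · exact neg_zero.symm

end WaveVectors

section GalerkinEuler

variable {ι : Type*} [Fintype ι] {Λ : Finset (ι → ℤ)} {u : (ι → ℤ) → ι → ℂ}

/-- The Galerkin–Euler vector field in any dimension, for any finite set `Λ` of retained modes.
At `k = 0` its value is zero whatever the convention for `lerayProj 0`, because of the factor
`k · u_h`. -/
noncomputable def galerkinEulerField (Λ : Finset (ι → ℤ)) (u : (ι → ℤ) → ι → ℂ) (k : ι → ℤ) :
    ι → ℂ :=
  -Complex.I • ∑ h ∈ Λ, ∑ l ∈ Λ with h + l = k, waveDot k (u h) • lerayProj k (u l)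

theorem dotProduct_galerkinEulerField {k : ι → ℤ} {w : ι → ℂ} (hw : waveDot k w = 0) :
    w ⬝ᵥ galerkinEulerField Λ u k =
      -Complex.I * ∑ h ∈ Λ, ∑ l ∈ Λ with h + l = k, waveDot k (u h) * (w ⬝ᵥ u l) := by
  simp only [galerkinEulerField, dotProduct_smul, dotProduct_sum, dotProduct_lerayProj hw,
    smul_eq_mul]

theorem dotProduct_galerkinEulerField_neg {p : ι → ℤ} (hdiv : waveDot p (u p) = 0) :
    u p ⬝ᵥ galerkinEulerField Λ u (-p) =
      Complex.I * ∑ h ∈ Λ, ∑ l ∈ Λ with p + h + l = 0, triadTransfer u p h l := by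
  have hdiv_neg : waveDot (-p) (u p) = 0 := by rw [waveDot_neg, hdiv, neg_zero]
  have htriad (h l : ι → ℤ) : h + l = -p ↔ p + h + l = 0 := by
    rw [eq_neg_iff_add_eq_zero, add_comm, add_assoc]
  simp only [dotProduct_galerkinEulerField hdiv_neg, htriad, triadTransfer, waveDot_neg, neg_mul,
    Finset.sum_neg_distrib, mul_neg, neg_neg]

theorem sum_dotProduct_galerkinEulerField_eq_zero (hΛ : ∀ k ∈ Λ, -k ∈ Λ)
    (hdiv : ∀ k ∈ Λ, waveDot k (u k) = 0) :
    ∑ k ∈ Λ, u (-k) ⬝ᵥ galerkinEulerField Λ u k = 0 := by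
  calc ∑ k ∈ Λ, u (-k) ⬝ᵥ galerkinEulerField Λ u k
      = ∑ p ∈ Λ, u p ⬝ᵥ galerkinEulerField Λ u (-p) :=
        Finset.sum_nbij' Neg.neg Neg.neg hΛ hΛ (fun _ _ => neg_neg _) (fun _ _ => neg_neg _)
          fun _ _ => by rw [neg_neg]
    _ = Complex.I *
          ∑ p ∈ Λ, ∑ h ∈ Λ, ∑ l ∈ Λ with p + h + l = 0, triadTransfer u p h l := by
        rw [Finset.mul_sum]
        exact Finset.sum_congr rfl fun p hp => dotProduct_galerkinEulerField_neg (hdiv p hp)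
    _ = 0 := by rw [sum_triadTransfer_eq_zero hdiv, mul_zero]

theorem galerkin_euler_energy_conserved_general (hΛ : ∀ k ∈ Λ, -k ∈ Λ)
    (hreal : ∀ k ∈ Λ, u (-k) = star (u k)) (hdiv : ∀ k ∈ Λ, waveDot k (u k) = 0) :
    ∑ k ∈ Λ, star (u k) ⬝ᵥ galerkinEulerField Λ u k = 0 := by
  rw [← sum_dotProduct_galerkinEulerField_eq_zero hΛ hdiv]
  exact Finset.sum_congr rfl fun k hk => by rw [hreal k hk]

end GalerkinEuler

theorem neg_mem_eulerModes {N : ℕ} {k : Fin 3 → ℤ} (hk : k ∈ eulerModes N) :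
    -k ∈ eulerModes N := by
  simp only [eulerModes, Finset.mem_filter, Fintype.mem_piFinset, Finset.mem_Icc, ne_eq,
    neg_eq_zero, Pi.neg_apply] at hk ⊢
  exact ⟨fun j => ⟨neg_le_neg (hk.1 j).2, neg_le.mp (hk.1 j).1⟩, hk.2⟩

theorem eulerDot_eq_waveDot (k : Fin 3 → ℤ) (v : Fin 3 → ℂ) : eulerDot k v = waveDot k v := rfl

theorem eulerB_eq_galerkinEulerField (N : ℕ) (u : (Fin 3 → ℤ) → Fin 3 → ℂ) :
    eulerB N u = galerkinEulerField (eulerModes N) u := by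
  ext k j
  simp only [eulerB, galerkinEulerField, lerayProj, eulerDot_eq_waveDot, Finset.sum_filter,
    Finset.sum_apply, ite_apply, Pi.smul_apply, Pi.sub_apply, Pi.zero_apply, smul_eq_mul]

/-- **Energy conservation for the Galerkin approximation of the 3D Euler equations.**
Under the reality condition `u_{-k} = conj u_k` and the incompressibility condition
`k · u_k = 0`, the total energy `∑_{k∈Λ} |u_k|²` is conserved by the flow of `B`:
`∑_{k∈Λ} Re ⟨u_k, B_k(u)⟩ = 0`. -/
theorem galerkin_euler_energy_conserved
    (Nstar : ℕ) (u : (Fin 3 → ℤ) → Fin 3 → ℂ)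
    (hreal : ∀ k : Fin 3 → ℤ, u (-k) = fun j => starRingEnd ℂ (u k j))
    (hincomp : ∀ k ∈ eulerModes Nstar, eulerDot k (u k) = 0) :
    ∑ k ∈ eulerModes Nstar,
      (∑ j, starRingEnd ℂ (u k j) * eulerB Nstar u k j).re = 0 := by
  simp only [eulerDot_eq_waveDot] at hincomp
  rw [← Complex.re_sum, eulerB_eq_galerkinEulerField]
  exact congrArg Complex.re <| galerkin_euler_energy_conserved_general
    (fun _ => neg_mem_eulerModes) (fun k _ => hreal k) hincomp
end
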